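/- arXiv:2212.10473 — 2 statements merged into one kernel-verified Lean document; each statement's English description precedes it below -/
import Mathlib

section
/- Let X = Y = [0,1] and let μ = ν = λ be Lebesgue measure on [0,1]. There exists a bounded continuous function h : X × Y × 𝒫(Y) → ℝ (where 𝒫(Y) carries the topology of weak convergence; moreover h can be taken Lipschitz when 𝒫(Y) is equipped with the Kantorovich–Rubinshtein norm) such that the function p ↦ h(x,y,p) is convex on 𝒫(Y) for every x ∈ X and y ∈ Y, and yet the nonlinear Kantorovich problem of minimizing σ ↦ ∫_{X×Y} h(x,y,σ^x) σ(dx dy) over σ ∈ Π(λ,λ) has no minimizer: the infimum (which equals 0 for the constructed h) is not attained. -/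
/-! Take `h x y p = |x - T y| + ∫ |y - z| dp(z)` with the tent map `T y = 1 - |2y - 1|`; it is
nonnegative, Lipschitz and affine in `p`.

*No plan has cost `0`.* If the cost of `σ ∈ Π(λ,λ)` vanishes, then for `σ`-a.e. `(x, y)` one has
`x = T y` and `σ^x = δ_y`. With `A = {x | σ^x [0,1/2] = 1}` this gives `T y ∈ A ↔ y ≤ 1/2` for
`λ`-a.e. `y`. Both `λ` and `T` are invariant under `y ↦ 1 - y`, so also `T y ∈ A ↔ 1 - y ≤ 1/2`,
and hence `y = 1/2` for a.e. `y`, which is absurd (`cost_pos`).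

*Plans of small cost.* Let `φ k u = (k + u) / N` parametrize the `k`-th of `N` equal subintervals,
and let `ψ b u ∈ {u / 2, 1 - u / 2}` be the two inverse branches of `T`. The average over `k` and
`b` of the laws of `(φ k (ψ b u), ψ b (φ k u))`, `u ∼ λ`, has both marginals `λ`, because `λ` is
self-similar under the `φ k` and under the `ψ b` (`sum_map_φ`, `sum_map_ψ`). On its support
`T y = φ k u` is within `1 / N` of `x = φ k (ψ b u)`. The branch `b` can be read off from `x` (it
says in which half of its subinterval `x` lies), so `y` is within `1 / N` of the measurable function
`branchMap N x` of `x`, and `σ^x` is within `1 / N` of the Dirac mass there. The cost is thus at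
most `3 / N` (`approxPlan_cost`). -/

open MeasureTheory

noncomputable section

/-- The unit interval `[0,1]` as a subspace of `ℝ`. -/
abbrev I01 := Set.Icc (0:ℝ) 1

/-- The conditional measures `σ^x` of a probability measure `σ` on a product space with
respect to its first marginal, given by the disintegration `σ(dx dy) = σ^x(dy) μ(dx)`. -/
def condMeas {X Y : Type*} [MeasurableSpace X] [MeasurableSpace Y]
    [StandardBorelSpace Y] [Nonempty Y]
    (σ : ProbabilityMeasure (X × Y)) (x : X) : ProbabilityMeasure Y :=
  ⟨(σ : Measure (X × Y)).condKernel x, inferInstance⟩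

/-- The Kantorovich–Rubinshtein distance between two probability measures on a metric
space: the supremum of `∫ f dp − ∫ f dq` over all `1`-Lipschitz functions `f` with `|f| ≤ 1`. -/
def KRdist {Y : Type*} [MeasurableSpace Y] [PseudoMetricSpace Y]
    (p q : ProbabilityMeasure Y) : ℝ :=
  ⨆ f : {f : Y → ℝ // LipschitzWith 1 f ∧ ∀ y, |f y| ≤ 1},
    (∫ y, f.1 y ∂(p : Measure Y) - ∫ y, f.1 y ∂(q : Measure Y))

open ProbabilityTheory Set Filter

/-! ### The cost function -/

/-- The mean distance `∫ |y - z| dp(z)` from `y` to a `p`-distributed point. -/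
def meanDist (y : I01) (p : Measure I01) : ℝ := ∫ z, |(y:ℝ) - z| ∂p

/-- The tent map, with values in `ℝ`. -/
def tent (y : I01) : ℝ := 1 - |2 * (y:ℝ) - 1|

/-- The cost `h`. -/
def cost (x y : I01) (p : Measure I01) : ℝ := |(x:ℝ) - tent y| + meanDist y p

lemma abs_sub_le_one (y z : I01) : |(y:ℝ) - z| ≤ 1 := by
  have := y.2.1; have := y.2.2; have := z.2.1; have := z.2.2
  rw [abs_le]; constructor <;> linarith

lemma continuous_absSub (y : I01) : Continuous (fun z : I01 => |(y:ℝ) - z|) := by fun_prop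

lemma integrable_absSub (y : I01) (p : Measure I01) [IsFiniteMeasure p] :
    Integrable (fun z : I01 => |(y:ℝ) - z|) p :=
  Integrable.of_bound (continuous_absSub y).aestronglyMeasurable 1
    (Eventually.of_forall fun z => by simpa using abs_sub_le_one y z)

lemma meanDist_nonneg (y : I01) (p : Measure I01) : 0 ≤ meanDist y p :=
  integral_nonneg fun _ => abs_nonneg _

lemma meanDist_le (y : I01) (p : Measure I01) [IsProbabilityMeasure p] {c : ℝ}
    (h : ∀ᵐ z : I01 ∂p, |(y:ℝ) - z| ≤ c) : meanDist y p ≤ c := by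
  have := integral_mono_ae (integrable_absSub y p) (integrable_const c) h
  simpa [meanDist] using this

lemma meanDist_le_one (y : I01) (p : Measure I01) [IsProbabilityMeasure p] : meanDist y p ≤ 1 :=
  meanDist_le y p (Eventually.of_forall fun z => abs_sub_le_one y z)

lemma meanDist_sub_le (y y' : I01) (p : Measure I01) [IsProbabilityMeasure p] :
    meanDist y p - meanDist y' p ≤ dist y y' := by
  have : meanDist y p ≤ ∫ z : I01, (|(y':ℝ) - z| + dist y y') ∂p := by
    refine integral_mono (integrable_absSub y p)
      ((integrable_absSub y' p).add (integrable_const _)) fun z => ?_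
    have := abs_sub_le (y:ℝ) y' z
    rw [Subtype.dist_eq, Real.dist_eq]
    simp only
    linarith
  rw [integral_add (integrable_absSub y' p) (integrable_const _)] at this
  simp only [integral_const, probReal_univ, one_smul] at this
  unfold meanDist at *
  linarith

lemma cost_nonneg (x y : I01) (p : Measure I01) : 0 ≤ cost x y p :=
  add_nonneg (abs_nonneg _) (meanDist_nonneg _ _)

lemma cost_le (x y : I01) (p : Measure I01) [IsProbabilityMeasure p] : cost x y p ≤ 2 := by
  have h1 := meanDist_le_one y p
  have h2 : |(x:ℝ) - tent y| ≤ 1 := by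
    have := x.2.1; have := x.2.2; have := y.2.1; have := y.2.2
    have : |2 * (y:ℝ) - 1| ≤ 1 := by rw [abs_le]; constructor <;> linarith
    have := abs_nonneg (2 * (y:ℝ) - 1)
    unfold tent
    rw [abs_le]; constructor <;> linarith
  unfold cost
  linarith

lemma abs_cost_le (x y : I01) (p : Measure I01) [IsProbabilityMeasure p] : |cost x y p| ≤ 2 := by
  rw [abs_of_nonneg (cost_nonneg x y p)]
  exact cost_le x y p

lemma continuous_tent : Continuous tent := by unfold tent; fun_prop

lemma continuous_meanDist :
    Continuous (fun q : I01 × ProbabilityMeasure I01 => meanDist q.1 q.2) := by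
  refine continuous_prod_of_continuous_lipschitzWith
    (fun q : I01 × ProbabilityMeasure I01 => meanDist q.1 q.2) 1 (fun y => ?_) (fun p => ?_)
  · exact ProbabilityMeasure.continuous_integral_continuousMap
      (⟨fun z : I01 => |(y:ℝ) - z|, continuous_absSub y⟩ : C(I01, ℝ))
  · refine LipschitzWith.of_dist_le_mul fun y y' => ?_
    have h1 := meanDist_sub_le y y' (p : Measure I01)
    have h2 := meanDist_sub_le y' y (p : Measure I01)
    rw [dist_comm y' y] at h2
    rw [Real.dist_eq, NNReal.coe_one, one_mul, abs_le]
    constructor <;> linarith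

lemma continuous_cost : Continuous (fun q : I01 × I01 × ProbabilityMeasure I01 =>
    cost q.1 q.2.1 (q.2.2 : Measure I01)) := by
  unfold cost
  refine Continuous.add ?_ ?_
  · have := continuous_tent
    fun_prop
  · exact continuous_meanDist.comp (f := fun q : I01 × I01 × ProbabilityMeasure I01 =>
      q.2) (by fun_prop)

lemma le_KRdist (p q : ProbabilityMeasure I01) (f : I01 → ℝ) (hf : LipschitzWith 1 f)
    (hf1 : ∀ y, |f y| ≤ 1) :
    ∫ y, f y ∂(p : Measure I01) - ∫ y, f y ∂(q : Measure I01) ≤ KRdist p q := by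
  have key : ∀ (f : I01 → ℝ) (r : ProbabilityMeasure I01), (∀ y, |f y| ≤ 1) →
      |∫ y, f y ∂(r : Measure I01)| ≤ 1 := fun f r h => by
    simpa using norm_integral_le_of_norm_le_const (μ := (r : Measure I01)) (f := f) (C := 1)
      (Eventually.of_forall h)
  refine le_ciSup (f := fun f : {f : I01 → ℝ // LipschitzWith 1 f ∧ ∀ y, |f y| ≤ 1} =>
    (∫ y, f.1 y ∂(p : Measure I01) - ∫ y, f.1 y ∂(q : Measure I01))) ⟨2, ?_⟩ ⟨f, hf, hf1⟩
  rintro _ ⟨g, rfl⟩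
  have h1 := abs_le.1 (key g.1 p g.2.2)
  have h2 := abs_le.1 (key g.1 q g.2.2)
  simp only
  linarith

lemma abs_meanDist_sub_le_KRdist (y : I01) (p q : ProbabilityMeasure I01) :
    |meanDist y p - meanDist y q| ≤ KRdist p q := by
  have hL : LipschitzWith 1 (fun z : I01 => |(y:ℝ) - z|) := by
    refine LipschitzWith.of_dist_le_mul fun z z' => ?_
    rw [Real.dist_eq, NNReal.coe_one, one_mul, Subtype.dist_eq, Real.dist_eq]
    refine (abs_abs_sub_abs_le_abs_sub _ _).trans_eq ?_
    rw [abs_sub_comm]; congr 1; ring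
  have h1 := le_KRdist p q _ hL (fun z => by simpa using abs_sub_le_one y z)
  -- the opposite inequality comes from the test function `-|y - z|`
  have h2 := le_KRdist p q _ hL.neg (fun z => by simpa using abs_sub_le_one y z)
  simp only [Pi.neg_apply, integral_neg] at h2
  unfold meanDist
  rw [abs_le]
  constructor <;> linarith

lemma cost_lipschitz (x x' y y' : I01) (p p' : ProbabilityMeasure I01) :
    |cost x y p - cost x' y' p'| ≤ 3 * (dist x x' + dist y y' + KRdist p p') := by
  have h0 : 0 ≤ KRdist p p' := (abs_nonneg _).trans (abs_meanDist_sub_le_KRdist y p p')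
  have h1 := abs_le.1 (abs_meanDist_sub_le_KRdist y p p')
  have h2 := meanDist_sub_le y y' (p' : Measure I01)
  have h3 := meanDist_sub_le y' y (p' : Measure I01)
  rw [dist_comm y' y] at h3
  have h4 : |tent y - tent y'| ≤ 2 * dist y y' := by
    unfold tent
    rw [Subtype.dist_eq, Real.dist_eq, ← abs_two (α := ℝ), ← abs_mul, abs_two]
    calc |1 - |2 * (y:ℝ) - 1| - (1 - |2 * (y':ℝ) - 1|)|
        = |(|2 * (y':ℝ) - 1| - |2 * (y:ℝ) - 1|)| := by congr 1; ring
      _ ≤ |(2 * (y':ℝ) - 1) - (2 * (y:ℝ) - 1)| := abs_abs_sub_abs_le_abs_sub _ _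
      _ = _ := by rw [abs_sub_comm]; congr 1; ring
  have h5 : |(|(x:ℝ) - tent y| - |(x':ℝ) - tent y'|)| ≤ dist x x' + 2 * dist y y' := by
    refine (abs_abs_sub_abs_le_abs_sub _ _).trans ?_
    have : ((x:ℝ) - tent y) - (x' - tent y') = (x - x') - (tent y - tent y') := by ring
    rw [this]
    refine (abs_sub _ _).trans ?_
    rw [Subtype.dist_eq, Real.dist_eq]
    linarith
  have h6 := abs_le.1 h5
  have hx : 0 ≤ dist x x' := dist_nonneg
  have hy : 0 ≤ dist y y' := dist_nonneg
  unfold cost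
  rw [abs_le]
  constructor <;> linarith

/-- The cost is affine, in particular convex, in the measure argument. -/
lemma cost_affine (x y : I01) (p₁ p₂ p : ProbabilityMeasure I01) (t : ℝ) (h0 : 0 ≤ t) (h1 : t ≤ 1)
    (hp : (p : Measure I01) = ENNReal.ofReal t • (p₁ : Measure I01)
            + ENNReal.ofReal (1 - t) • (p₂ : Measure I01)) :
    cost x y p = t * cost x y p₁ + (1 - t) * cost x y p₂ := by
  have : meanDist y p = t * meanDist y p₁ + (1 - t) * meanDist y p₂ := by
    unfold meanDist
    rw [hp, integral_add_measure, integral_smul_measure, integral_smul_measure,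
      ENNReal.toReal_ofReal h0, ENNReal.toReal_ofReal (by linarith)]
    · simp
    · exact (integrable_absSub y _).smul_measure ENNReal.ofReal_ne_top
    · exact (integrable_absSub y _).smul_measure ENNReal.ofReal_ne_top
  unfold cost
  rw [this]
  ring

lemma measurable_cost (σ : ProbabilityMeasure (I01 × I01)) :
    StronglyMeasurable (fun q : I01 × I01 => cost q.1 q.2 (condMeas σ q.1)) := by
  unfold cost
  refine StronglyMeasurable.add ?_ ?_
  · have := continuous_tent
    exact Continuous.stronglyMeasurable (by fun_prop)
  · have h : StronglyMeasurable (fun r : (I01 × I01) × I01 => |(r.1.2:ℝ) - r.2|) :=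
      Continuous.stronglyMeasurable (by fun_prop)
    exact h.integral_kernel_prod_right'
      (κ := (σ : Measure (I01 × I01)).condKernel.comap Prod.fst measurable_fst)

lemma integrable_cost (σ : ProbabilityMeasure (I01 × I01)) :
    Integrable (fun q : I01 × I01 => cost q.1 q.2 (condMeas σ q.1)) (σ : Measure (I01 × I01)) :=
  Integrable.of_bound (measurable_cost σ).aestronglyMeasurable 2
    (Eventually.of_forall fun _ => abs_cost_le _ _ _)

/-! ### Every plan has positive cost -/

lemma tent_symm (y : I01) : tent (unitInterval.symm y) = tent y := by
  unfold tent
  rw [unitInterval.coe_symm_eq, abs_sub_comm]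
  congr 2; ring

/-- The closed left half `[0, 1/2]`. -/
def leftHalf : Set I01 := {y | (y:ℝ) ≤ 1/2}

lemma measurableSet_leftHalf : MeasurableSet leftHalf :=
  measurableSet_le measurable_subtype_coe measurable_const

lemma cost_pos (σ : ProbabilityMeasure (I01 × I01))
    (h2 : (σ : Measure (I01 × I01)).map Prod.snd = volume) :
    0 < ∫ q, cost q.1 q.2 (condMeas σ q.1) ∂(σ : Measure (I01 × I01)) := by
  refine lt_of_le_of_ne (integral_nonneg fun q => cost_nonneg _ _ _) fun h0 => ?_
  have hz := (integral_eq_zero_iff_of_nonneg (fun q => cost_nonneg _ _ _) (integrable_cost σ)).1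
    h0.symm
  let A : Set I01 := {x | (σ : Measure (I01 × I01)).condKernel x leftHalf = 1}
  have hA : MeasurableSet A :=
    Kernel.measurable_coe _ measurableSet_leftHalf (measurableSet_singleton 1)
  -- `σ^x = δ_y` and `x = T y` almost surely
  have h3 : ∀ᵐ q ∂(σ : Measure (I01 × I01)),
      (q.2 ∈ leftHalf ↔ tent q.2 ∈ (Subtype.val '' A : Set ℝ)) := by
    filter_upwards [hz] with q hq
    have hm : meanDist q.2 (condMeas σ q.1) = 0 := by
      have := abs_nonneg ((q.1:ℝ) - tent q.2)
      have := meanDist_nonneg q.2 (condMeas σ q.1)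
      simp only [cost, Pi.zero_apply] at hq
      linarith
    have hT : tent q.2 = q.1 := by
      simp only [cost, Pi.zero_apply, hm, add_zero, abs_eq_zero] at hq
      linarith
    have hae := (integral_eq_zero_iff_of_nonneg (fun z : I01 => abs_nonneg _)
      (integrable_absSub q.2 _)).1 hm
    have hae : ∀ᵐ z : I01 ∂((σ : Measure (I01 × I01)).condKernel q.1), z = q.2 := by
      have hae' : ∀ᵐ z : I01 ∂((σ : Measure (I01 × I01)).condKernel q.1), |(q.2:ℝ) - z| = 0 := hae
      filter_upwards [hae'] with z hz
      exact Subtype.ext (by rw [abs_eq_zero] at hz; linarith)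
    rw [hT, Subtype.val_injective.mem_set_image]
    constructor
    · intro hy
      refine (mem_ae_iff_prob_eq_one measurableSet_leftHalf).1 ?_
      filter_upwards [hae] with z hz
      rwa [hz]
    · intro hx
      by_contra hy
      have hx : (σ : Measure (I01 × I01)).condKernel q.1 leftHalf = 1 := hx
      have : (σ : Measure (I01 × I01)).condKernel q.1 leftHalf = 0 := by
        rw [measure_eq_zero_iff_ae_notMem]
        filter_upwards [hae] with z hz
        rwa [hz]
      rw [this] at hx
      exact zero_ne_one hx
  have h4 : ∀ᵐ y ∂(volume : Measure I01),
      (y ∈ leftHalf ↔ tent y ∈ (Subtype.val '' A : Set ℝ)) := by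
    rw [← h2, ae_map_iff measurable_snd.aemeasurable]
    · exact h3
    · exact measurableSet_leftHalf.iff
        (continuous_tent.measurable (measurableSet_Icc.subtype_image hA))
  have h5 := unitInterval.measurePreserving_symm.quasiMeasurePreserving.ae h4
  have h6 : ∀ᵐ y ∂(volume : Measure I01), y ≠ ⟨1/2, by norm_num, by norm_num⟩ := by
    simp [ae_iff]
  obtain ⟨y, h4, h5, h6⟩ := (h4.and (h5.and h6)).exists
  rw [tent_symm, ← h4] at h5
  simp only [leftHalf, mem_ofPred_eq, unitInterval.coe_symm_eq] at h5
  refine h6 (Subtype.ext ?_)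
  simp only
  rcases le_total (y:ℝ) (1/2) with h | h
  · have := h5.2 h
    linarith
  · have := h5.1 (by linarith)
    linarith

/-! ### Plans of small cost -/

/-- The affine parametrization `u ↦ (k + u) / N` of the `k`-th of `N` equal subintervals. -/
def φ {N : ℕ} (k : Fin N) (u : I01) : I01 :=
  ⟨(k + u) / N, by
    have hk : ((k:ℕ):ℝ) + 1 ≤ N := by exact_mod_cast k.2
    have := u.2.1; have := u.2.2
    have : (0:ℝ) ≤ (k:ℕ) := by positivity
    constructor
    · positivity
    · rw [div_le_one (by linarith)]; linarith⟩

/-- The inverse branches `u / 2` and `1 - u / 2` of the tent map. -/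
def ψ (b : Bool) (u : I01) : I01 :=
  if b then φ (N := 2) 0 u else unitInterval.symm (φ (N := 2) 0 u)

lemma continuous_φ {N : ℕ} (k : Fin N) : Continuous (φ k) := by
  unfold φ; fun_prop

lemma continuous_ψ (b : Bool) : Continuous (ψ b) := by
  have := continuous_φ (N := 2) 0
  unfold ψ
  split_ifs
  · exact this
  · exact unitInterval.continuous_symm.comp this

lemma coe_ψ_true (u : I01) : (ψ true u : ℝ) = u / 2 := by simp [ψ, φ]

lemma coe_ψ_false (u : I01) : (ψ false u : ℝ) = 1 - u / 2 := by
  simp [ψ, φ, unitInterval.coe_symm_eq]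

lemma tent_ψ (b : Bool) (u : I01) : tent (ψ b u) = u := by
  have := u.2.1; have := u.2.2
  unfold tent
  cases b
  · rw [coe_ψ_false, abs_of_nonneg] <;> linarith
  · rw [coe_ψ_true, abs_of_nonpos] <;> linarith

lemma restrict_Ico_eq_sum {N : ℕ} (hN : 0 < N) (n : ℕ) :
    (volume : Measure ℝ).restrict (Ico 0 ((n:ℝ) / N)) =
      ∑ k ∈ Finset.range n, volume.restrict (Ico ((k:ℝ) / N) ((k + 1) / N)) := by
  induction n with
  | zero => simp
  | succ n ih =>
    rw [Finset.sum_range_succ, ← ih, ← Measure.restrict_union _ measurableSet_Ico,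
      Ico_union_Ico_eq_Ico]
    · push_cast; rfl
    · positivity
    · gcongr; linarith
    · rw [Set.disjoint_left]
      rintro x ⟨_, h⟩ ⟨h', _⟩
      linarith

lemma map_val_volume :
    (volume : Measure I01).map Subtype.val = (volume : Measure ℝ).restrict (Ico 0 1) := by
  rw [unitInterval.measurePreserving_coe.map_eq]
  exact Measure.restrict_congr_set Ico_ae_eq_Icc.symm

lemma map_affine_restrict {N : ℕ} (hN : 0 < N) (k : ℕ) :
    ((volume : Measure ℝ).restrict (Ico 0 1)).map (fun u => ((k:ℝ) + u) / N) =
      (N : ENNReal) • volume.restrict (Ico ((k:ℝ) / N) ((k + 1) / N)) := by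
  have hN' : (0:ℝ) < N := by exact_mod_cast hN
  have hpre : Ico (0:ℝ) 1 = (fun u => ((k:ℝ) + u) / N) ⁻¹' Ico ((k:ℝ) / N) ((k + 1) / N) := by
    ext u
    simp only [mem_Ico, mem_preimage, div_le_div_iff_of_pos_right hN',
      div_lt_div_iff_of_pos_right hN']
    constructor <;> rintro ⟨_, _⟩ <;> constructor <;> linarith
  have hmap : (volume : Measure ℝ).map (fun u => ((k:ℝ) + u) / N) = (N : ENNReal) • volume := by
    have : (fun u => ((k:ℝ) + u) / N) = (fun x => (N:ℝ)⁻¹ * x) ∘ (fun u => (k:ℝ) + u) := by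
      ext u; simp [div_eq_inv_mul]
    rw [this, ← Measure.map_map (by fun_prop) (by fun_prop), map_add_left_eq_self,
      Real.map_volume_mul_left (by positivity)]
    simp
  rw [hpre, ← Measure.restrict_map (by fun_prop) measurableSet_Ico, hmap, Measure.restrict_smul]

/-- Lebesgue measure is self-similar under subdivision into `N` equal subintervals. -/
lemma sum_map_φ {N : ℕ} (hN : 0 < N) :
    ∑ k : Fin N, (volume : Measure I01).map (φ k) = (N : ENNReal) • volume := by
  apply (unitInterval.measurableEmbedding_coe).map_injective
  rw [Measure.map_finset_sum' (by fun_prop), Measure.map_smul, map_val_volume]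
  have : ∀ k : Fin N, ((volume : Measure I01).map (φ k)).map Subtype.val =
      (N : ENNReal) • (volume : Measure ℝ).restrict (Ico ((k:ℕ) / N : ℝ) (((k:ℕ) + 1) / N)) := by
    intro k
    rw [← map_affine_restrict hN k, ← map_val_volume,
      Measure.map_map (by fun_prop) (continuous_φ k).measurable,
      Measure.map_map (by fun_prop) (by fun_prop)]
    rfl
  simp_rw [this]
  rw [← Finset.smul_sum, Fin.sum_univ_eq_sum_range
    (fun k : ℕ => (volume : Measure ℝ).restrict (Ico ((k:ℝ) / N) ((k + 1) / N))),
    ← restrict_Ico_eq_sum hN, div_self (by positivity)]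

/-- Lebesgue measure is self-similar under the two inverse branches of the tent map. -/
lemma sum_map_ψ : ∑ b : Bool, (volume : Measure I01).map (ψ b) = (2 : ENNReal) • volume := by
  have h := sum_map_φ (N := 2) (by norm_num)
  have hf : (volume : Measure I01).map (ψ false) = volume.map (φ (N := 2) 1) := by
    have : ψ false = φ (N := 2) 1 ∘ unitInterval.symm := by
      ext u
      rw [coe_ψ_false]
      simp [φ, unitInterval.coe_symm_eq]
      ring
    rw [this, ← Measure.map_map (continuous_φ _).measurable unitInterval.measurable_symm,
      unitInterval.measurePreserving_symm.map_eq]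
  have ht : (volume : Measure I01).map (ψ true) = volume.map (φ (N := 2) 0) := rfl
  rw [Fin.sum_univ_two] at h
  rw [Fintype.sum_bool, hf, ht, h]
  simp

/-- The average over `k` and `b` of the laws of `(φ k (ψ b u), ψ b (φ k u))` for uniform `u`. -/
def approxPlan (N : ℕ) : Measure (I01 × I01) :=
  ((N : ENNReal) * 2)⁻¹ • ∑ i : Fin N × Bool,
    (volume : Measure I01).map (fun u => (φ i.1 (ψ i.2 u), ψ i.2 (φ i.1 u)))

lemma continuous_pair {N : ℕ} (i : Fin N × Bool) :
    Continuous (fun u => (φ i.1 (ψ i.2 u), ψ i.2 (φ i.1 u))) :=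
  ((continuous_φ _).comp (continuous_ψ _)).prodMk ((continuous_ψ _).comp (continuous_φ _))

lemma inv_smul_smul_volume {N : ℕ} (hN : 0 < N) :
    ((N : ENNReal) * 2)⁻¹ • ((N : ENNReal) * 2) • (volume : Measure I01) = volume := by
  rw [smul_smul, ENNReal.inv_mul_cancel, one_smul]
  · simp [hN.ne']
  · exact ENNReal.mul_ne_top (by simp) (by simp)

lemma approxPlan_fst {N : ℕ} (hN : 0 < N) : (approxPlan N).map Prod.fst = volume := by
  rw [approxPlan, Measure.map_smul, Measure.map_finset_sum' (by fun_prop)]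
  have : ∀ i : Fin N × Bool, ((volume : Measure I01).map
      (fun u => (φ i.1 (ψ i.2 u), ψ i.2 (φ i.1 u)))).map Prod.fst =
      (volume.map (ψ i.2)).map (φ i.1) := by
    intro i
    rw [Measure.map_map measurable_fst (continuous_pair i).measurable,
      Measure.map_map (continuous_φ _).measurable (continuous_ψ _).measurable]
    rfl
  simp_rw [this]
  rw [Fintype.sum_prod_type]
  simp_rw [← Measure.map_finset_sum' (continuous_φ _).aemeasurable, sum_map_ψ, Measure.map_smul,
    ← Finset.smul_sum, sum_map_φ hN, smul_smul]
  rw [← smul_smul, mul_comm (2 : ENNReal), inv_smul_smul_volume hN]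

lemma approxPlan_snd {N : ℕ} (hN : 0 < N) : (approxPlan N).map Prod.snd = volume := by
  rw [approxPlan, Measure.map_smul, Measure.map_finset_sum' (by fun_prop)]
  have : ∀ i : Fin N × Bool, ((volume : Measure I01).map
      (fun u => (φ i.1 (ψ i.2 u), ψ i.2 (φ i.1 u)))).map Prod.snd =
      (volume.map (φ i.1)).map (ψ i.2) := by
    intro i
    rw [Measure.map_map measurable_snd (continuous_pair i).measurable,
      Measure.map_map (continuous_ψ _).measurable (continuous_φ _).measurable]
    rfl
  simp_rw [this]
  rw [Fintype.sum_prod_type_right]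
  simp_rw [← Measure.map_finset_sum' (continuous_ψ _).aemeasurable, sum_map_φ hN, Measure.map_smul,
    ← Finset.smul_sum, sum_map_ψ, smul_smul]
  rw [← smul_smul, inv_smul_smul_volume hN]

lemma approxPlan_prob {N : ℕ} (hN : 0 < N) : IsProbabilityMeasure (approxPlan N) := by
  constructor
  rw [← preimage_univ (f := Prod.fst), ← Measure.map_apply measurable_fst MeasurableSet.univ,
    approxPlan_fst hN, measure_univ]

/-- An approximate transport map for `approxPlan N`: the inverse branch of the tent map selected by
the half of its subinterval of length `1 / N` in which `x` lies. -/
def branchMap (N : ℕ) (x : I01) : ℝ := if Int.fract (N * (x:ℝ)) ≤ 1/2 then x / 2 else 1 - x / 2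

lemma measurable_branchMap (N : ℕ) : Measurable (branchMap N) := by
  unfold branchMap
  refine Measurable.ite (measurableSet_le ?_ measurable_const) (by fun_prop) (by fun_prop)
  exact measurable_fract.comp (by fun_prop)

lemma abs_φ_sub_φ_le {N : ℕ} (k : Fin N) (u v : I01) : |(φ k u : ℝ) - φ k v| ≤ 1 / N := by
  have : (φ k u : ℝ) - φ k v = (u - v) / N := by simp [φ]; ring
  rw [this, abs_div, Nat.abs_cast]
  gcongr
  exact abs_sub_le_one u v

lemma branchMap_φ_ψ {N : ℕ} (k : Fin N) (b : Bool) (u : I01) (hu : 0 < (u:ℝ)) (hu1 : (u:ℝ) < 1) :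
    branchMap N (φ k (ψ b u)) = ψ b (φ k (ψ b u)) := by
  have hN : (N:ℝ) ≠ 0 := by have := k.pos; positivity
  have h : Int.fract ((N:ℝ) * (φ k (ψ b u) : ℝ)) = ψ b u := by
    have h1 : (N:ℝ) * (φ k (ψ b u) : ℝ) = (k:ℕ) + (ψ b u : ℝ) := by
      simp only [φ]; field_simp
    rw [h1, Int.fract_natCast_add, Int.fract_eq_self]
    cases b
    · rw [coe_ψ_false]; constructor <;> linarith
    · rw [coe_ψ_true]; constructor <;> linarith
  unfold branchMap
  rw [h]
  cases b
  · rw [if_neg (by rw [coe_ψ_false]; linarith), coe_ψ_false (φ k _)]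
  · rw [if_pos (by rw [coe_ψ_true]; linarith), coe_ψ_true (φ k _)]

lemma abs_ψ_sub_ψ_le (b : Bool) (u v : I01) : |(ψ b u : ℝ) - ψ b v| ≤ |(u:ℝ) - v| := by
  have := abs_nonneg ((u:ℝ) - v)
  have h2 : |((u:ℝ) - v) / 2| ≤ |(u:ℝ) - v| := by rw [abs_div, abs_two]; linarith
  cases b
  · rw [coe_ψ_false, coe_ψ_false, abs_sub_comm]
    convert h2 using 2; ring
  · rw [coe_ψ_true, coe_ψ_true]
    convert h2 using 2; ring

lemma ae_approxPlan (N : ℕ) : ∀ᵐ q ∂(approxPlan N),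
    |(q.1:ℝ) - tent q.2| ≤ 1 / N ∧ |(q.2:ℝ) - branchMap N q.1| ≤ 1 / N := by
  refine Measure.ae_smul_measure ?_ _
  rw [ae_finsetSum_measure_iff]
  intro i _
  have hm : MeasurableSet {q : I01 × I01 |
      |(q.1:ℝ) - tent q.2| ≤ 1 / N ∧ |(q.2:ℝ) - branchMap N q.1| ≤ 1 / N} := by
    have h1 := continuous_tent.measurable
    have h2 := measurable_branchMap N
    have h3 : Measurable fun q : I01 × I01 => |(q.1:ℝ) - tent q.2| :=
      continuous_abs.measurable.comp (by fun_prop)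
    have h4 : Measurable fun q : I01 × I01 => |(q.2:ℝ) - branchMap N q.1| :=
      continuous_abs.measurable.comp (by fun_prop)
    exact (measurableSet_le h3 measurable_const).inter (measurableSet_le h4 measurable_const)
  rw [ae_map_iff (continuous_pair i).aemeasurable hm]
  have h0 : ∀ᵐ u ∂(volume : Measure I01), u ≠ 0 := by simp [ae_iff]
  have h1 : ∀ᵐ u ∂(volume : Measure I01), u ≠ 1 := by simp [ae_iff]
  filter_upwards [h0, h1] with u h0 h1
  have hu0 : 0 < (u:ℝ) := unitInterval.coe_pos.2 (unitInterval.pos_iff_ne_zero.2 h0)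
  have hu1 : (u:ℝ) < 1 := unitInterval.coe_lt_one.2 (unitInterval.lt_one_iff_ne_one.2 h1)
  refine ⟨?_, ?_⟩
  · rw [tent_ψ]
    exact abs_φ_sub_φ_le _ _ _
  · rw [branchMap_φ_ψ _ _ u hu0 hu1]
    exact (abs_ψ_sub_ψ_le _ _ _).trans (abs_φ_sub_φ_le _ _ _)

lemma approxPlan_cost {N : ℕ} (σ : ProbabilityMeasure (I01 × I01))
    (hσ : (σ : Measure (I01 × I01)) = approxPlan N) :
    ∫ q, cost q.1 q.2 (condMeas σ q.1) ∂(σ : Measure (I01 × I01)) ≤ 3 / N := by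
  have hae := ae_approxPlan N
  rw [← hσ] at hae
  -- by disintegration, `σ^x` is concentrated near `branchMap N x` for a.e. `x`
  have hcond : ∀ᵐ q ∂(σ : Measure (I01 × I01)),
      ∀ᵐ z : I01 ∂((σ : Measure (I01 × I01)).condKernel q.1), |(z:ℝ) - branchMap N q.1| ≤ 1 / N := by
    have h := hae
    rw [← (σ : Measure (I01 × I01)).disintegrate (σ : Measure (I01 × I01)).condKernel] at h
    have h' := Measure.ae_ae_of_ae_compProd h
    have h'' := ae_of_ae_map measurable_fst.aemeasurable h'
    filter_upwards [h''] with q hq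
    filter_upwards [hq] with z hz
    exact hz.2
  have hle : ∀ᵐ q ∂(σ : Measure (I01 × I01)), cost q.1 q.2 (condMeas σ q.1) ≤ 3 / N := by
    filter_upwards [hae, hcond] with q h1 h2
    have h3 : meanDist q.2 (condMeas σ q.1) ≤ 1 / N + 1 / N := by
      refine meanDist_le _ _ ?_
      filter_upwards [h2] with z hz
      have := abs_sub_le (q.2:ℝ) (branchMap N q.1) z
      rw [abs_sub_comm (branchMap N q.1)] at this
      linarith [h1.2]
    have h4 : (3:ℝ) / N = 1 / N + (1 / N + 1 / N) := by ring
    rw [h4]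
    exact add_le_add h1.1 h3
  have := integral_mono_ae (integrable_cost σ) (integrable_const _) hle
  simpa using this

/-- **Non-existence for the nonlinear Kantorovich problem with cost `h(x, y, σ^x)`.**
Let `X = Y = [0,1]` and `μ = ν = λ` Lebesgue measure on `[0,1]`. There exists a bounded
continuous function `h : X × Y × 𝒫(Y) → ℝ` (moreover Lipschitz when `𝒫(Y)` carries the
Kantorovich–Rubinshtein norm) which is convex in the measure argument, such that the
nonlinear Kantorovich problem `σ ↦ ∫ h(x,y,σ^x) dσ` over `Π(λ,λ)` has infimum `0`
(every plan has strictly positive cost, while plans of arbitrarily small cost exist),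
so the infimum is not attained. -/
theorem nonexistence_nonlinear_kantorovich_xyp :
    ∃ h : I01 → I01 → ProbabilityMeasure I01 → ℝ,
      -- h is bounded
      (∃ C : ℝ, ∀ x y p, |h x y p| ≤ C) ∧
      -- h is continuous on X × Y × 𝒫(Y) with the weak topology on 𝒫(Y)
      Continuous (fun q : I01 × I01 × ProbabilityMeasure I01 => h q.1 q.2.1 q.2.2) ∧
      -- moreover, h is Lipschitz when 𝒫(Y) is equipped with the Kantorovich–Rubinshtein norm
      (∃ L : ℝ, 0 ≤ L ∧ ∀ x x' y y' p p',
        |h x y p - h x' y' p'| ≤ L * (dist x x' + dist y y' + KRdist p p')) ∧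
      -- p ↦ h x y p is convex for all x, y
      (∀ (x y : I01) (p₁ p₂ p : ProbabilityMeasure I01) (t : ℝ), 0 ≤ t → t ≤ 1 →
        (p : Measure I01) = ENNReal.ofReal t • (p₁ : Measure I01)
            + ENNReal.ofReal (1 - t) • (p₂ : Measure I01) →
        h x y p ≤ t * h x y p₁ + (1 - t) * h x y p₂) ∧
      -- every transport plan has strictly positive cost: the infimum 0 is not attained
      (∀ σ : ProbabilityMeasure (I01 × I01),
        (σ : Measure (I01 × I01)).map Prod.fst = volume →
        (σ : Measure (I01 × I01)).map Prod.snd = volume →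
        0 < ∫ q, h q.1 q.2 (condMeas σ q.1) ∂(σ : Measure (I01 × I01))) ∧
      -- the infimum over transport plans equals 0
      (∀ ε : ℝ, 0 < ε → ∃ σ : ProbabilityMeasure (I01 × I01),
        (σ : Measure (I01 × I01)).map Prod.fst = volume ∧
        (σ : Measure (I01 × I01)).map Prod.snd = volume ∧
        ∫ q, h q.1 q.2 (condMeas σ q.1) ∂(σ : Measure (I01 × I01)) < ε) := by
  refine ⟨fun x y p => cost x y p, ⟨2, fun x y p => abs_cost_le x y p⟩, continuous_cost,
    ⟨3, by norm_num, cost_lipschitz⟩,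
    fun x y p₁ p₂ p t h0 h1 hp => (cost_affine x y p₁ p₂ p t h0 h1 hp).le,
    fun σ _ h2 => cost_pos σ h2, fun ε hε => ?_⟩
  obtain ⟨N, hN⟩ := exists_nat_gt (3 / ε)
  have hN0 : (0:ℝ) < N := lt_trans (by positivity) hN
  have hN1 : 0 < N := by exact_mod_cast hN0
  refine ⟨⟨approxPlan N, approxPlan_prob hN1⟩, approxPlan_fst hN1, approxPlan_snd hN1,
    (approxPlan_cost (N := N) _ rfl).trans_lt ?_⟩
  rw [div_lt_iff₀ hε] at hN
  rw [div_lt_iff₀ hN0]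
  linarith
end
end

section
/- Let X and Y be Polish spaces, μ a Borel probability measure on X and ν a Borel probability measure on Y. Let h(x,p) = Ψ(g(p) − f(x)), where f : X → ℝ^d is continuous, g : 𝒫(Y) → ℝ^d is bounded and continuous (for the weak topology on 𝒫(Y)), and Ψ : ℝ^d → ℝ is a nonnegative strictly convex function that is differentiable with locally Lipschitz gradient. Suppose that μ(f⁻¹(A)) = 0 for every set A ⊂ ℝ^d of Hausdorff dimension at most d−1 in case d > 1, and that μ is atomless in case d = 1. If the level sets {p ∈ 𝒫(Y) : g(p) = c} are convex for every c ∈ ℝ^d, then the infimum of σ ↦ ∫_X Ψ(g(σ^x) − f(x)) μ(dx) over σ ∈ Π(μ,ν) is attained. -/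
/-!
The problem is relaxed to probability measures `R` on `ℝ^d × 𝒫(Y)` with first marginal `f_* μ` and
with second marginal having barycenter `ν`, the cost being `∫ Ψ (g p - a) R(da, dp)`. Every coupling
`σ` yields such a plan of the same cost, the law of `(f x, σ^x)`, and the relaxed problem has a
minimizer `R` by compactness (`exists_min_relaxed`). It remains to produce a coupling with the cost
of `R`.

If the minimum is finite, the support `Γ ⊆ ℝ^d × ℝ^d` of the law of `(a, g p)` under `R` is
cyclically monotone for `Ψ (b - a)` (`swap_support`). If `a` carries two distinct points of `Γ`, the
gradients of `Ψ` at the two corresponding displacements differ, since `Ψ` is strictly convex, and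
monotonicity keeps the difference of two nearby points of the same kind outside a cone around the
difference `w` of the gradients. Hence the set of such `a` is covered by countably many Lipschitz
graphs over hyperplanes (`multi_subset`): it has dimension at most `d - 1`, and is countable when `d = 1`.

Off this set, `g` is almost surely constant under the conditional law `Q_a` of `R` given `a`, so
`Q_a` is carried by a closed convex level set of `g`. This level set contains the barycenter of `Q_a`
(`bar_mem_of_convex`), and replacing `Q_a` by the Dirac mass at its barycenter changes neither the
cost nor the constraint. If `d > 1` this covers `μ`-almost every point. If `d = 1` there remain
countably many values `a` of `f`; on each fibre of positive measure the measure `μ` has no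
atom, so some map `x ↦ V x` has conditional law exactly `Q_a` there (`exists_map_eq_smul`). The
coupling with disintegration `V` has the cost of `R` (`exists_collapse`).

The space `𝒫(Y)` carries in Mathlib the weak topology and, independently, the σ-algebra generated by
evaluations; the disintegration of `R` and the measurability of `g` rest on the fact that
`𝒫(Y)` is standard Borel with this σ-algebra and that the σ-algebra is Borel.
-/

open MeasureTheory ENNReal

noncomputable section

namespace NLK

set_option linter.unusedSectionVars false

open Topology Filter Set

/-! ### The weak topology on probability measures over a Polish space -/

section

variable {Y : Type*} [MeasurableSpace Y] [TopologicalSpace Y]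

/-- A weakly continuous family of probability measures is measurable for the σ-algebra on `𝒫(Y)`
generated by the evaluations `p ↦ p s`: on closed `s` these are upper semicontinuous. -/
lemma measurable_toMeasure_borel {T : Type*} [TopologicalSpace T] [MeasurableSpace T]
    [OpensMeasurableSpace T] [BorelSpace Y] [HasOuterApproxClosed Y]
    {q : T → ProbabilityMeasure Y} (hq : Continuous q) : Measurable q := by
  refine Measurable.subtype_mk
    (Measurable.measure_of_isPiSystem_of_isProbabilityMeasure (μ := fun t => (q t : Measure Y))
    (S := {s | IsClosed s}) ?_ isPiSystem_isClosed ?_)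
  · rw [← borel_eq_generateFrom_isClosed]; exact BorelSpace.measurable_eq
  · intro F hF
    refine UpperSemicontinuous.measurable ?_
    intro t y hy
    have h := ProbabilityMeasure.limsup_measure_closed_le_of_tendsto (hq.tendsto t) hF
    exact eventually_lt_of_limsup_lt (lt_of_le_of_lt h hy)

/-- Pushing forward along a topological embedding pulls back the weak topology, by the
portmanteau theorem: every open set of `Y` is the preimage of an open set of `K`. -/
lemma isInducing_map {K : Type*} [TopologicalSpace K] [MeasurableSpace K] [BorelSpace K]
    [HasOuterApproxClosed K] [BorelSpace Y] [HasOuterApproxClosed Y]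
    [FirstCountableTopology (ProbabilityMeasure K)]
    {e : Y → K} (he : IsEmbedding e) :
    IsInducing (fun p : ProbabilityMeasure Y => p.map he.continuous.measurable.aemeasurable) := by
  refine isInducing_iff_nhds.mpr fun p => le_antisymm ?_ ?_
  · exact ((ProbabilityMeasure.continuous_map he.continuous).tendsto p).le_comap
  · set j := fun p : ProbabilityMeasure Y => p.map he.continuous.measurable.aemeasurable
    change Tendsto (fun q => q) (comap j (𝓝 (j p))) (𝓝 p)
    refine tendsto_of_forall_isOpen_le_liminf' fun G hG => ?_
    obtain ⟨G', hG', rfl⟩ := he.isInducing.isOpen_iff.mp hG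
    have h := ProbabilityMeasure.le_liminf_measure_open_of_tendsto
      (tendsto_comap (f := j) (x := 𝓝 (j p))) hG'
    have e1 : ∀ q : ProbabilityMeasure Y, (j q : Measure K) G' = (q : Measure Y) (e ⁻¹' G') :=
      fun q => Measure.map_apply he.continuous.measurable hG'.measurableSet
    simpa only [e1] using h

/-- The weak topology is the coarsest one making the integrals of bounded continuous functions
continuous. -/
lemma isInducing_integral [OpensMeasurableSpace Y] : IsInducing
    (fun (p : ProbabilityMeasure Y) (φ : BoundedContinuousFunction Y ℝ) => ∫ y, φ y ∂(p : Measure Y)) := by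
  refine isInducing_iff_nhds.mpr fun p => le_antisymm ?_ ?_
  · exact (Continuous.tendsto (continuous_pi fun φ =>
      ProbabilityMeasure.continuous_integral_boundedContinuousFunction φ) p).le_comap
  · set j := (fun (p : ProbabilityMeasure Y) (φ : BoundedContinuousFunction Y ℝ) => ∫ y, φ y ∂(p : Measure Y))
    change Tendsto (fun q => q) (comap j (𝓝 (j p))) (𝓝 p)
    rw [ProbabilityMeasure.tendsto_iff_forall_integral_tendsto]
    have := tendsto_comap (f := j) (x := 𝓝 (j p))
    rw [tendsto_pi_nhds] at this
    exact this

lemma measurable_integral_bcf [OpensMeasurableSpace Y] (φ : BoundedContinuousFunction Y ℝ) :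
    Measurable fun p : ProbabilityMeasure Y => ∫ y, φ y ∂(p : Measure Y) := by
  let κ : ProbabilityTheory.Kernel (ProbabilityMeasure Y) Y := ⟨fun p => p, measurable_subtype_coe⟩
  have : ProbabilityTheory.IsMarkovKernel κ := ⟨fun p => p.2⟩
  exact (StronglyMeasurable.integral_kernel (κ := κ) φ.continuous.stronglyMeasurable).measurable

/-- The evaluation σ-algebra on `𝒫(Y)` is the Borel σ-algebra of the weak topology. Second
countability is what reduces Borel sets to the subbasis given by integrals. -/
lemma borelSpace_of_secondCountable [BorelSpace Y] [HasOuterApproxClosed Y]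
    [SecondCountableTopology (ProbabilityMeasure Y)] : BorelSpace (ProbabilityMeasure Y) := by
  constructor
  refine le_antisymm ?_ ?_
  · intro s hs
    have := @measurable_toMeasure_borel Y _ _ (ProbabilityMeasure Y) _ (borel _)
      (@OpensMeasurableSpace.mk _ _ (borel _) le_rfl) _ _ _ continuous_id
    exact this hs
  · have h : (inferInstance : TopologicalSpace (ProbabilityMeasure Y)) =
        TopologicalSpace.generateFrom {s | ∃ (φ : BoundedContinuousFunction Y ℝ) (U : Set ℝ),
          IsOpen U ∧ s = (fun p : ProbabilityMeasure Y => ∫ y, φ y ∂(p : Measure Y)) ⁻¹' U} := by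
      refine le_antisymm ?_ ?_
      · refine le_generateFrom ?_
        rintro s ⟨φ, U, hU, rfl⟩
        exact hU.preimage (ProbabilityMeasure.continuous_integral_boundedContinuousFunction φ)
      · rw [(isInducing_integral (Y := Y)).eq_induced, ← continuous_iff_le_induced]
        refine @continuous_pi _ _ _ (_) _ _ fun φ => ?_
        refine @Continuous.mk _ _ (_) _ _ fun U hU => ?_
        exact TopologicalSpace.isOpen_generateFrom_of_mem ⟨φ, U, hU, rfl⟩
    rw [borel_eq_generateFrom_of_subbasis h]
    refine MeasurableSpace.generateFrom_le ?_
    rintro s ⟨φ, U, hU, rfl⟩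
    exact measurable_integral_bcf φ hU.measurableSet

variable [PolishSpace Y] [BorelSpace Y]

lemma secondCountable_pm_compact {K : Type*} [TopologicalSpace K] [MeasurableSpace K] [BorelSpace K]
    [CompactSpace K] [TopologicalSpace.MetrizableSpace K]
    [TopologicalSpace.SeparableSpace K] :
    SecondCountableTopology (ProbabilityMeasure K) := by
  let := TopologicalSpace.metrizableSpaceMetric (ProbabilityMeasure K)
  infer_instance

/-- The weak topology on `𝒫(Y)` is second countable: embed `Y` in the Hilbert cube. -/
instance secondCountable_pm : SecondCountableTopology (ProbabilityMeasure Y) := by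
  let := TopologicalSpace.upgradeIsCompletelyMetrizable Y
  obtain ⟨e, he⟩ := Metric.PiNatEmbed.exists_embedding_to_hilbert_cube (X := Y)
  have : SecondCountableTopology (ProbabilityMeasure (ℕ → unitInterval)) :=
    secondCountable_pm_compact
  exact (isInducing_map he).secondCountableTopology

/-- The evaluation σ-algebra on `𝒫(Y)` is the Borel σ-algebra of the weak topology. -/
instance borelSpace_pm : BorelSpace (ProbabilityMeasure Y) := borelSpace_of_secondCountable

lemma standardBorel_of_measurableEquiv {A B : Type*} [MeasurableSpace A] [MeasurableSpace B]
    [StandardBorelSpace B] (e : A ≃ᵐ B) : StandardBorelSpace A := by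
  let := upgradeStandardBorel B
  let τ : TopologicalSpace A := TopologicalSpace.induced e inferInstance
  have hP : PolishSpace A :=
    (e.toEquiv.toHomeomorphOfIsInducing ⟨rfl⟩).isClosedEmbedding.polishSpace
  refine ⟨τ, ⟨?_⟩, hP⟩
  rw [borel_comap, ← BorelSpace.measurable_eq (α := B)]
  exact e.measurableEmbedding.comap_eq.symm

/-- `𝒫(Y)` is standard Borel: an embedding of `Y` in the Hilbert cube `K` realises it as the
measurable subset of the compact metrizable space `𝒫(K)` of measures carried by the range. -/
instance standardBorel_pm : StandardBorelSpace (ProbabilityMeasure Y) := by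
  let := TopologicalSpace.upgradeIsCompletelyMetrizable Y
  obtain ⟨e, he⟩ := Metric.PiNatEmbed.exists_embedding_to_hilbert_cube (X := Y)
  have : SecondCountableTopology (ProbabilityMeasure (ℕ → unitInterval)) :=
    secondCountable_pm_compact
  let := TopologicalSpace.metrizableSpaceMetric (ProbabilityMeasure (ℕ → unitInterval))
  have : BorelSpace (ProbabilityMeasure (ℕ → unitInterval)) := borelSpace_of_secondCountable
  have heM : MeasurableEmbedding e := he.continuous.measurableEmbedding he.injective
  have hj := isInducing_map (Y := Y) he
  set j := fun p : ProbabilityMeasure Y => p.map he.continuous.measurable.aemeasurable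
  have hr : range j = {q : ProbabilityMeasure (ℕ → unitInterval) |
      (q : Measure (ℕ → unitInterval)) (range e)ᶜ = 0} := by
    ext q
    constructor
    · rintro ⟨p, rfl⟩
      have : (j p : Measure (ℕ → unitInterval)) (range e)ᶜ = (p : Measure Y) (e ⁻¹' (range e)ᶜ) :=
        Measure.map_apply he.continuous.measurable heM.measurableSet_range.compl
      simp [this]
    -- a measure carried by `range e` is the pushforward of its pullback along `e`
    · intro hq
      have h1 : ((q : Measure (ℕ → unitInterval)).comap e).map e = q := by
        rw [heM.map_comap, Measure.restrict_eq_self_of_ae_mem]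
        exact hq
      have h2 : IsProbabilityMeasure ((q : Measure (ℕ → unitInterval)).comap e) := by
        constructor
        have : ((q : Measure (ℕ → unitInterval)).comap e).map e univ = 1 := by
          rw [h1]; simp
        rwa [Measure.map_apply he.continuous.measurable MeasurableSet.univ] at this
      exact ⟨⟨_, h2⟩, Subtype.ext h1⟩
  have hmeas : MeasurableSet (range j) := by
    rw [hr]
    exact ((Measure.measurable_coe heM.measurableSet_range.compl).comp measurable_subtype_coe)
      (measurableSet_singleton 0)
  have hJ : MeasurableEmbedding j := hj.isEmbedding.measurableEmbedding hmeas
  have := hmeas.standardBorel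
  exact standardBorel_of_measurableEquiv hJ.equivRange

end

/-! ### The relaxed problem: plans on `E × 𝒫(Y)` with prescribed barycenter -/

section

section bar
variable {Y : Type*} [MeasurableSpace Y]

lemma measurable_toMeasure :
    Measurable (ProbabilityMeasure.toMeasure : ProbabilityMeasure Y → Measure Y) :=
  measurable_subtype_coe

/-- The barycenter `∫ p Q(dp)` of a measure `Q` on `𝒫(Y)`, as a measure on `Y`. -/
def bar (Q : Measure (ProbabilityMeasure Y)) : Measure Y :=
  (Q.map ProbabilityMeasure.toMeasure).join

lemma bar_apply (Q : Measure (ProbabilityMeasure Y)) {s : Set Y} (hs : MeasurableSet s) :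
    bar Q s = ∫⁻ p, (p : Measure Y) s ∂Q := by
  rw [bar, Measure.join_apply hs, lintegral_map (Measure.measurable_coe hs) measurable_toMeasure]

lemma lintegral_bar (Q : Measure (ProbabilityMeasure Y)) {φ : Y → ℝ≥0∞} (hφ : Measurable φ) :
    ∫⁻ y, φ y ∂(bar Q) = ∫⁻ p, ∫⁻ y, φ y ∂(p : Measure Y) ∂Q := by
  rw [bar, Measure.lintegral_join hφ.aemeasurable,
    lintegral_map (Measure.measurable_lintegral hφ) measurable_toMeasure]

instance (Q : Measure (ProbabilityMeasure Y)) [IsProbabilityMeasure Q] :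
    IsProbabilityMeasure (bar Q) := ⟨by simp [bar_apply]⟩

end bar

variable {Y : Type*} [MeasurableSpace Y] [TopologicalSpace Y] [PolishSpace Y] [BorelSpace Y]

/-- The measures on `𝒫(Y)` with a given barycenter `ν` are tight. By Markov's inequality, outside
a set of small `Q`-measure `p (K n)ᶜ ≤ u n` holds for all `n`, where `K n` are compact sets
nearly exhausting `ν`, and these conditions define a compact set of measures `p`. -/
lemma isTight_bar_eq (ν : Measure Y) [IsProbabilityMeasure ν] :
    IsTightMeasureSet {Q : Measure (ProbabilityMeasure Y) | bar Q = ν} := by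
  rw [isTightMeasureSet_iff_exists_isCompact_measure_compl_le]
  intro ε hε
  obtain ⟨ε', hε', hsum⟩ := ENNReal.exists_pos_sum_of_countable hε.ne' ℕ
  have hν := isTightMeasureSet_iff_exists_isCompact_measure_compl_le.mp
    (isTightMeasureSet_singleton (μ := ν))
  let u : ℕ → NNReal := fun n => 1 / ((n : NNReal) + 1)
  have hu : ∀ n, 0 < u n := fun n => by positivity
  have hlim : Tendsto u atTop (𝓝 0) := tendsto_one_div_add_atTop_nhds_zero_nat
  have hK : ∀ n, ∃ K : Set Y, IsCompact K ∧ ν Kᶜ ≤ ε' n * u n := by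
    intro n
    obtain ⟨K, hK, h⟩ := hν (ε' n * u n)
      (ENNReal.mul_pos (by simpa using (hε' n).ne') (by simpa using (hu n).ne'))
    exact ⟨K, hK, h ν rfl⟩
  choose K hKc hKν using hK
  refine ⟨_, isCompact_setOfPred_probabilityMeasure_mass_eq_compl_isCompact_le hlim hKc
    (.inl inferInstance), ?_⟩
  intro Q hQ
  have hsub : {p : ProbabilityMeasure Y | ∀ n, p (K n)ᶜ ≤ u n}ᶜ ⊆
      ⋃ n, {p : ProbabilityMeasure Y | (u n : ℝ≥0∞) ≤ (p : Measure Y) (K n)ᶜ} := by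
    intro p hp
    simp only [mem_compl_iff, mem_ofPred_eq, not_forall, not_le] at hp
    obtain ⟨n, hn⟩ := hp
    refine mem_iUnion.mpr ⟨n, ?_⟩
    have : ((p (K n)ᶜ : NNReal) : ℝ≥0∞) = (p : Measure Y) (K n)ᶜ :=
      ProbabilityMeasure.ennreal_coeFn_eq_coeFn_toMeasure p _
    rw [mem_ofPred_eq, ← this]
    exact_mod_cast hn.le
  refine (measure_mono hsub).trans ((measure_iUnion_le _).trans (le_trans ?_ hsum.le))
  refine ENNReal.tsum_le_tsum fun n => ?_
  have hm : MeasurableSet (K n)ᶜ := (hKc n).measurableSet.compl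
  have h0 : (u n : ℝ≥0∞) ≠ 0 := by simpa using (hu n).ne'
  refine (meas_ge_le_lintegral_div
    ((Measure.measurable_coe hm).comp measurable_subtype_coe).aemeasurable
    h0 ENNReal.coe_ne_top).trans ?_
  have e : ∫⁻ p : ProbabilityMeasure Y, (p : Measure Y) (K n)ᶜ ∂Q = ν (K n)ᶜ := by
    rw [← bar_apply Q hm, hQ]
  refine ENNReal.div_le_of_le_mul ?_
  exact e.trans_le (hKν n)

variable {E : Type*} [MeasurableSpace E] [TopologicalSpace E] [PolishSpace E] [BorelSpace E]

/-- Admissible plans of the relaxed problem: measures on `E × 𝒫(Y)` whose first marginal is `α`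
and whose second marginal has barycenter `ν`. The law of `(f x, σ^x)` under `μ` is such a plan,
with `α = f_* μ`, for every `σ ∈ Π(μ,ν)`. -/
def Adm (α : Measure E) (ν : Measure Y) (R : Measure (E × ProbabilityMeasure Y)) : Prop :=
  R.fst = α ∧ bar R.snd = ν

/-- Both admissibility constraints are weakly closed: the barycenter is tested against the
continuous functions `p ↦ ∫ φ dp`. -/
lemma isClosed_adm (α : Measure E) [IsProbabilityMeasure α] (ν : Measure Y)
    [IsProbabilityMeasure ν] :
    IsClosed {R : ProbabilityMeasure (E × ProbabilityMeasure Y) |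
      Adm α ν (R : Measure (E × ProbabilityMeasure Y))} := by
  have h1 : IsClosed {R : ProbabilityMeasure (E × ProbabilityMeasure Y) |
      R.map (measurable_fst.aemeasurable) = (⟨α, inferInstance⟩ : ProbabilityMeasure E)} :=
    isClosed_eq (ProbabilityMeasure.continuous_map continuous_fst) continuous_const
  let Φ : BoundedContinuousFunction Y NNReal →
      BoundedContinuousFunction (E × ProbabilityMeasure Y) NNReal := fun φ =>
    BoundedContinuousFunction.mkOfBound
      ⟨fun z => z.2.toFiniteMeasure.testAgainstNN φ,
        (ProbabilityMeasure.continuous_testAgainstNN_eval φ).comp continuous_snd⟩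
      (nndist φ 0) (by
        have hb : ∀ p : ProbabilityMeasure Y, p.toFiniteMeasure.testAgainstNN φ ≤ nndist φ 0 := by
          intro p
          rw [← ENNReal.coe_le_coe, FiniteMeasure.testAgainstNN_coe_eq]
          calc _ ≤ ∫⁻ _, (nndist φ 0 : ℝ≥0∞) ∂(p : Measure Y) :=
                lintegral_mono fun y => ENNReal.coe_le_coe.mpr
                  (BoundedContinuousFunction.NNReal.upper_bound φ y)
            _ = _ := by simp
        intro x y
        simp only [ContinuousMap.coe_mk, NNReal.dist_eq]
        have h1 : ((x.2.toFiniteMeasure.testAgainstNN φ : NNReal) : ℝ) ≤ nndist φ 0 := hb x.2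
        have h2 : ((y.2.toFiniteMeasure.testAgainstNN φ : NNReal) : ℝ) ≤ nndist φ 0 := hb y.2
        have h3 := (x.2.toFiniteMeasure.testAgainstNN φ).2
        have h4 := (y.2.toFiniteMeasure.testAgainstNN φ).2
        simp only [NNReal.val_eq_coe] at h3 h4
        rw [abs_sub_le_iff]
        constructor <;> linarith)
  have hΦ : ∀ φ z, ((Φ φ z : NNReal) : ℝ≥0∞) = ∫⁻ y, φ y ∂(z.2 : Measure Y) := by
    intro φ z
    exact FiniteMeasure.testAgainstNN_coe_eq
  have h2 : IsClosed (⋂ φ : BoundedContinuousFunction Y NNReal,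
      {R : ProbabilityMeasure (E × ProbabilityMeasure Y) |
        ∫⁻ z, Φ φ z ∂(R : Measure (E × ProbabilityMeasure Y)) = ∫⁻ y, φ y ∂ν}) :=
    isClosed_iInter fun φ => isClosed_eq
      (ProbabilityMeasure.continuous_lintegral_boundedContinuousFunction _) continuous_const
  convert h1.inter h2 using 1
  ext R
  simp only [mem_inter_iff, mem_ofPred_eq, mem_iInter, Adm]
  refine and_congr ?_ ?_
  · exact (Subtype.ext_iff (a1 := R.map measurable_fst.aemeasurable)
      (a2 := (⟨α, inferInstance⟩ : ProbabilityMeasure E))).symm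
  · have key : ∀ φ : BoundedContinuousFunction Y NNReal,
        ∫⁻ z, Φ φ z ∂(R : Measure (E × ProbabilityMeasure Y)) =
          ∫⁻ y, φ y ∂(bar (R : Measure (E × ProbabilityMeasure Y)).snd) := by
      intro φ
      have hφ : Measurable fun y => (φ y : ℝ≥0∞) :=
        φ.continuous.measurable.coe_nnreal_ennreal
      rw [lintegral_bar _ hφ, Measure.snd, lintegral_map _ measurable_snd]
      · simp_rw [hΦ]
      · exact (Measure.measurable_lintegral hφ).comp measurable_subtype_coe
    simp_rw [key]
    constructor
    · intro h φ; rw [h]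
    · intro h; exact ext_of_forall_lintegral_eq_of_IsFiniteMeasure h

lemma isCompact_adm (α : Measure E) [IsProbabilityMeasure α] (ν : Measure Y)
    [IsProbabilityMeasure ν] :
    IsCompact {R : ProbabilityMeasure (E × ProbabilityMeasure Y) |
      Adm α ν (R : Measure (E × ProbabilityMeasure Y))} := by
  rw [← (isClosed_adm α ν).closure_eq]
  refine isCompact_closure_of_isTightMeasureSet (IsTightMeasureSet.prodMk ?_ ?_)
  · refine (isTightMeasureSet_singleton (μ := α)).subset ?_
    rintro _ ⟨_, ⟨R, hR, rfl⟩, rfl⟩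
    exact hR.1
  · refine (isTight_bar_eq ν).subset ?_
    rintro _ ⟨_, ⟨R, hR, rfl⟩, rfl⟩
    exact hR.2

lemma lsc_cost {W : Type*} [TopologicalSpace W] [MeasurableSpace W] [OpensMeasurableSpace W]
    {c : W → ℝ} (hc : Continuous c) :
    LowerSemicontinuous fun R : ProbabilityMeasure W =>
      ∫⁻ w, ENNReal.ofReal (c w) ∂(R : Measure W) := by
  -- the cost is the supremum of the integrals of the truncations `min c N`
  let b : ℕ → BoundedContinuousFunction W NNReal := fun N =>
    BoundedContinuousFunction.mkOfBound
      ⟨fun w => min (c w).toNNReal N, by fun_prop⟩ N (by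
        intro x y
        simp only [ContinuousMap.coe_mk, NNReal.dist_eq]
        rw [abs_sub_le_iff]
        have h1 := (min (c x).toNNReal N).2
        have h2 := (min (c y).toNNReal N).2
        have h3 : ((min (c x).toNNReal N : NNReal) : ℝ) ≤ N := by
          exact_mod_cast min_le_right _ _
        have h4 : ((min (c y).toNNReal N : NNReal) : ℝ) ≤ N := by
          exact_mod_cast min_le_right _ _
        simp only [NNReal.val_eq_coe] at h1 h2
        constructor <;> linarith)
  have h : (fun R : ProbabilityMeasure W => ∫⁻ w, ENNReal.ofReal (c w) ∂(R : Measure W)) =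
      fun R : ProbabilityMeasure W => ⨆ N, ∫⁻ w, b N w ∂(R : Measure W) := by
    funext R
    rw [← lintegral_iSup]
    · refine lintegral_congr fun w => ?_
      refine le_antisymm ?_ (iSup_le fun N => ?_)
      · obtain ⟨N, hN⟩ := exists_nat_ge (c w).toNNReal
        refine le_iSup_of_le N ?_
        have : b N w = (c w).toNNReal := min_eq_left hN
        rw [this]; rfl
      · exact ENNReal.coe_le_coe.mpr (min_le_left _ _)
    · intro N; exact (b N).continuous.measurable.coe_nnreal_ennreal
    · intro N M hNM w
      exact ENNReal.coe_le_coe.mpr (min_le_min le_rfl (by exact_mod_cast hNM))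
  rw [h]
  exact lowerSemicontinuous_iSup fun N =>
    (ProbabilityMeasure.continuous_lintegral_boundedContinuousFunction (b N)).lowerSemicontinuous

/-- The relaxed problem has a minimizer: the admissible plans form a nonempty compact set and
the cost is lower semicontinuous. -/
lemma exists_min_relaxed (α : Measure E) [IsProbabilityMeasure α] (ν : Measure Y)
    [IsProbabilityMeasure ν] {c : E × ProbabilityMeasure Y → ℝ} (hc : Continuous c) :
    ∃ R : Measure (E × ProbabilityMeasure Y), IsProbabilityMeasure R ∧ Adm α ν R ∧
      ∀ S : Measure (E × ProbabilityMeasure Y), IsProbabilityMeasure S → Adm α ν S →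
        ∫⁻ w, ENNReal.ofReal (c w) ∂(R) ≤ ∫⁻ w, ENNReal.ofReal (c w) ∂S := by
  have hne : {R : ProbabilityMeasure (E × ProbabilityMeasure Y) |
      Adm α ν (R : Measure (E × ProbabilityMeasure Y))}.Nonempty := by
    let p : ProbabilityMeasure Y := ⟨ν, inferInstance⟩
    refine ⟨⟨α.prod (Measure.dirac p), inferInstance⟩, ?_, ?_⟩
    · exact Measure.fst_prod
    · change bar (α.prod (Measure.dirac p)).snd = ν
      rw [Measure.snd_prod]
      ext s hs
      rw [bar_apply _ hs, lintegral_dirac' (f := fun q : ProbabilityMeasure Y => (q : Measure Y) s) _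
        ((Measure.measurable_coe hs).comp measurable_toMeasure)]
      rfl
  obtain ⟨R, hR, hmin⟩ := LowerSemicontinuousOn.exists_isMinOn hne (isCompact_adm α ν)
    ((lsc_cost hc).lowerSemicontinuousOn _)
  exact ⟨R, R.2, hR, fun S hS hS2 => isMinOn_iff.mp hmin ⟨S, hS⟩ hS2⟩

end

/-! ### Cyclical monotonicity of relaxed minimizers -/

section

variable {Y : Type*} [MeasurableSpace Y] [TopologicalSpace Y] [PolishSpace Y] [BorelSpace Y]
variable {E : Type*} [MeasurableSpace E] [TopologicalSpace E] [PolishSpace E] [BorelSpace E]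

/-- Exchanging the second marginals of two pieces `η • ρ₁`, `η • ρ₂` of an optimal plan cannot
lower the cost. The exchange keeps both marginals of `R`, hence its admissibility. -/
lemma swap_le {α : Measure E} {ν : Measure Y} {c : E × ProbabilityMeasure Y → ℝ}
    {R : Measure (E × ProbabilityMeasure Y)} [IsProbabilityMeasure R] (hR : Adm α ν R)
    (hmin : ∀ S : Measure (E × ProbabilityMeasure Y), IsProbabilityMeasure S → Adm α ν S →
        ∫⁻ w, ENNReal.ofReal (c w) ∂(R) ≤ ∫⁻ w, ENNReal.ofReal (c w) ∂S)
    (hfin : ∫⁻ w, ENNReal.ofReal (c w) ∂(R) ≠ ∞)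
    (ρ₁ ρ₂ : Measure (E × ProbabilityMeasure Y)) [IsProbabilityMeasure ρ₁] [IsProbabilityMeasure ρ₂]
    {η : ℝ≥0∞} (hη : η ≠ 0) (hη' : η ≠ ∞) (hle : η • (ρ₁ + ρ₂) ≤ R) :
    (∫⁻ w, ENNReal.ofReal (c w) ∂ρ₁) + ∫⁻ w, ENNReal.ofReal (c w) ∂ρ₂ ≤
      (∫⁻ w, ENNReal.ofReal (c w) ∂(ρ₁.fst.prod ρ₂.snd)) +
        ∫⁻ w, ENNReal.ofReal (c w) ∂(ρ₂.fst.prod ρ₁.snd) := by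
  have : IsFiniteMeasure (η • (ρ₁ + ρ₂)) := isFiniteMeasure_of_le R hle
  obtain ⟨S₀, hS₀⟩ : ∃ S₀, R = S₀ + η • (ρ₁ + ρ₂) :=
    ⟨R - η • (ρ₁ + ρ₂), (Measure.sub_add_cancel_of_le hle).symm⟩
  let S := S₀ + η • (ρ₁.fst.prod ρ₂.snd + ρ₂.fst.prod ρ₁.snd)
  have hfst : S.fst = R.fst := by
    rw [hS₀]
    simp only [S, Measure.fst, Measure.map_add _ _ measurable_fst, Measure.map_smul]
    congr 2
    simp only [← Measure.fst.eq_1, Measure.fst_prod]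
  have hsnd : S.snd = R.snd := by
    rw [hS₀]
    simp only [S, Measure.snd, Measure.map_add _ _ measurable_snd, Measure.map_smul]
    congr 2
    simp only [← Measure.snd.eq_1, Measure.snd_prod]
    rw [add_comm]
  have hS : IsProbabilityMeasure S := ⟨by rw [← Measure.fst_univ, hfst]; simp⟩
  have h := hmin S hS ⟨hfst.trans hR.1, by rw [hsnd]; exact hR.2⟩
  have hfin' : ∫⁻ w, ENNReal.ofReal (c w) ∂S₀ ≠ ∞ := by
    refine ne_top_of_le_ne_top hfin (lintegral_mono' ?_ le_rfl)
    rw [hS₀]; exact Measure.le_add_right le_rfl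
  rw [hS₀] at h
  simp only [S, lintegral_add_measure, lintegral_smul_measure, smul_eq_mul] at h
  exact (ENNReal.mul_le_mul_iff_right hη hη').mp ((ENNReal.add_le_add_iff_left hfin').mp h)

/-- If the cost depends on `p` only through `g p`, the law of `(a, g p)` under an optimal plan of
finite cost has cyclically monotone support. -/
lemma swap_support {E' : Type*} [MeasurableSpace E'] [TopologicalSpace E']
    [BorelSpace E'] [SecondCountableTopology E']
    {α : Measure E} {ν : Measure Y} {c : E × E' → ℝ} (hc : Continuous c) (hc0 : ∀ z, 0 ≤ c z)
    {g : ProbabilityMeasure Y → E'} (hg : Continuous g)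
    {R : Measure (E × ProbabilityMeasure Y)} [IsProbabilityMeasure R] (hR : Adm α ν R)
    (hmin : ∀ S : Measure (E × ProbabilityMeasure Y), IsProbabilityMeasure S → Adm α ν S →
        ∫⁻ w, ENNReal.ofReal (c (w.1, g w.2)) ∂(R) ≤ ∫⁻ w, ENNReal.ofReal (c (w.1, g w.2)) ∂S)
    (hfin : ∫⁻ w, ENNReal.ofReal (c (w.1, g w.2)) ∂(R) ≠ ∞)
    {a₁ a₂ : E} {b₁ b₂ : E'}
    (h₁ : (a₁, b₁) ∈ (R.map (fun w => (w.1, g w.2))).support)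
    (h₂ : (a₂, b₂) ∈ (R.map (fun w => (w.1, g w.2))).support) :
    c (a₁, b₁) + c (a₂, b₂) ≤ c (a₁, b₂) + c (a₂, b₁) := by
  have hG : Measurable (fun w : E × ProbabilityMeasure Y => (w.1, g w.2)) :=
    (continuous_fst.prodMk (hg.comp continuous_snd)).measurable
  refine le_of_forall_pos_le_add fun δ hδ => ?_
  -- neighbourhoods on which `c` varies by at most `δ / 4`
  have hnb : ∀ a b, ∃ U ∈ 𝓝 a, ∃ V ∈ 𝓝 b, ∀ x ∈ U, ∀ y ∈ V, |c (x, y) - c (a, b)| ≤ δ / 4 := by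
    intro a b
    have h : {z : E × E' | |c z - c (a, b)| ≤ δ / 4} ∈ 𝓝 (a, b) := by
      have := Metric.closedBall_mem_nhds (c (a, b)) (ε := δ / 4) (by positivity)
      filter_upwards [hc.tendsto (a, b) this] with z hz
      simpa [Real.dist_eq] using hz
    obtain ⟨U, hU, V, hV, hUV⟩ := mem_nhds_prod_iff.mp h
    exact ⟨U, hU, V, hV, fun x hx y hy => hUV (mk_mem_prod hx hy)⟩
  obtain ⟨U11, hU11, V11, hV11, k11⟩ := hnb a₁ b₁
  obtain ⟨U12, hU12, V12, hV12, k12⟩ := hnb a₁ b₂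
  obtain ⟨U21, hU21, V21, hV21, k21⟩ := hnb a₂ b₁
  obtain ⟨U22, hU22, V22, hV22, k22⟩ := hnb a₂ b₂
  obtain ⟨A₁, hA₁, oA₁, mA₁⟩ := mem_nhds_iff.mp (inter_mem hU11 hU12)
  obtain ⟨A₂, hA₂, oA₂, mA₂⟩ := mem_nhds_iff.mp (inter_mem hU21 hU22)
  obtain ⟨B₁, hB₁, oB₁, mB₁⟩ := mem_nhds_iff.mp (inter_mem hV11 hV21)
  obtain ⟨B₂, hB₂, oB₂, mB₂⟩ := mem_nhds_iff.mp (inter_mem hV12 hV22)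
  -- a general fact about a product neighbourhood of a support point
  have hpos : ∀ (a : E) (b : E') (A : Set E) (B : Set E'), IsOpen A → IsOpen B → a ∈ A → b ∈ B →
      (a, b) ∈ (R.map (fun w => (w.1, g w.2))).support → R (A ×ˢ (g ⁻¹' B)) ≠ 0 := by
    intro a b A B oA oB ma mb h
    have h' := (Measure.mem_support_iff_forall _).mp h (A ×ˢ B) (prod_mem_nhds (oA.mem_nhds ma) (oB.mem_nhds mb))
    rw [Measure.map_apply hG (oA.prod oB).measurableSet] at h'
    exact h'.ne'
  have p₁ := hpos a₁ b₁ A₁ B₁ oA₁ oB₁ mA₁ mB₁ h₁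
  have p₂ := hpos a₂ b₂ A₂ B₂ oA₂ oB₂ mA₂ mB₂ h₂
  set W₁ := A₁ ×ˢ (g ⁻¹' B₁)
  set W₂ := A₂ ×ˢ (g ⁻¹' B₂)
  have mgB₁ : MeasurableSet (g ⁻¹' B₁) := (oB₁.preimage hg).measurableSet
  have mgB₂ : MeasurableSet (g ⁻¹' B₂) := (oB₂.preimage hg).measurableSet
  have mW₁ : MeasurableSet W₁ := oA₁.measurableSet.prod mgB₁
  have mW₂ : MeasurableSet W₂ := oA₂.measurableSet.prod mgB₂
  let ρ₁ := ProbabilityTheory.cond R W₁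
  let ρ₂ := ProbabilityTheory.cond R W₂
  have : IsProbabilityMeasure ρ₁ := ProbabilityTheory.cond_isProbabilityMeasure p₁
  have : IsProbabilityMeasure ρ₂ := ProbabilityTheory.cond_isProbabilityMeasure p₂
  -- the factor `1 / 2` makes `η • (ρ₁ + ρ₂) ≤ R` hold even when `W₁` and `W₂` overlap
  let η : ℝ≥0∞ := min (R W₁) (R W₂) / 2
  have hη : η ≠ 0 := by
    simp only [η, ne_eq, ENNReal.div_eq_zero_iff, not_or]
    refine ⟨?_, by simp⟩
    intro h
    rcases min_choice (R W₁) (R W₂) with h' | h' <;> rw [h'] at h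
    · exact p₁ h
    · exact p₂ h
  have hηt : η ≠ ∞ := ENNReal.div_ne_top
    (ne_top_of_le_ne_top (measure_ne_top R W₁) (min_le_left _ _)) (by simp)
  have hhalf : ∀ W, R W ≠ 0 → min (R W₁) (R W₂) ≤ R W →
      η • ProbabilityTheory.cond R W ≤ (2⁻¹ : ℝ≥0∞) • R := by
    intro W hW hmW
    rw [ProbabilityTheory.cond, smul_smul]
    calc (η * (R W)⁻¹) • R.restrict W ≤ (2⁻¹ : ℝ≥0∞) • R.restrict W := by
          refine Measure.le_iff.mpr fun s _ => ?_
          simp only [Measure.smul_apply, smul_eq_mul]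
          gcongr
          calc η * (R W)⁻¹ ≤ (R W / 2) * (R W)⁻¹ := by gcongr; exact ENNReal.div_le_div_right hmW _
            _ = 2⁻¹ * (R W * (R W)⁻¹) := by rw [div_eq_mul_inv]; ring
            _ = 2⁻¹ := by rw [ENNReal.mul_inv_cancel hW (measure_ne_top R W), mul_one]
      _ ≤ _ := by
          refine Measure.le_iff.mpr fun s _ => ?_
          simp only [Measure.smul_apply, smul_eq_mul]
          gcongr
          exact Measure.restrict_le_self
  have hle : η • (ρ₁ + ρ₂) ≤ R := by
    rw [smul_add]
    calc _ ≤ (2⁻¹ : ℝ≥0∞) • R + (2⁻¹ : ℝ≥0∞) • R :=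
          add_le_add (hhalf W₁ p₁ (min_le_left _ _)) (hhalf W₂ p₂ (min_le_right _ _))
      _ = R := by rw [← add_smul, ENNReal.inv_two_add_inv_two, one_smul]
  have key := swap_le (c := fun w => c (w.1, g w.2)) hR hmin hfin ρ₁ ρ₂ hη hηt hle
  have ae₁ : ∀ᵐ w ∂ρ₁, w ∈ W₁ := ProbabilityTheory.ae_cond_mem mW₁
  have ae₂ : ∀ᵐ w ∂ρ₂, w ∈ W₂ := ProbabilityTheory.ae_cond_mem mW₂
  have lower : ∀ (ρ : Measure (E × ProbabilityMeasure Y)) (t : ℝ), IsProbabilityMeasure ρ →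
      (∀ᵐ w ∂ρ, t ≤ c (w.1, g w.2)) →
      ENNReal.ofReal t ≤ ∫⁻ w, ENNReal.ofReal (c (w.1, g w.2)) ∂ρ := by
    intro ρ t _ h
    calc ENNReal.ofReal t = ∫⁻ _, ENNReal.ofReal t ∂ρ := by simp
      _ ≤ _ := lintegral_mono_ae (h.mono fun w hw => ENNReal.ofReal_le_ofReal hw)
  have upper : ∀ (ρ : Measure (E × ProbabilityMeasure Y)) (t : ℝ), IsProbabilityMeasure ρ →
      (∀ᵐ w ∂ρ, c (w.1, g w.2) ≤ t) →
      ∫⁻ w, ENNReal.ofReal (c (w.1, g w.2)) ∂ρ ≤ ENNReal.ofReal t := by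
    intro ρ t _ h
    calc _ ≤ ∫⁻ _, ENNReal.ofReal t ∂ρ :=
          lintegral_mono_ae (h.mono fun w hw => ENNReal.ofReal_le_ofReal hw)
      _ = _ := by simp
  have l₁ := lower ρ₁ (c (a₁, b₁) - δ / 4) inferInstance (ae₁.mono fun w hw => by
    have := k11 w.1 (hA₁ hw.1).1 (g w.2) (hB₁ hw.2).1
    linarith [(abs_le.mp this).1])
  have l₂ := lower ρ₂ (c (a₂, b₂) - δ / 4) inferInstance (ae₂.mono fun w hw => by
    have := k22 w.1 (hA₂ hw.1).2 (g w.2) (hB₂ hw.2).2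
    linarith [(abs_le.mp this).1])
  have cross : ∀ (ρ ρ' : Measure (E × ProbabilityMeasure Y)) (A : Set E)
      (B : Set (ProbabilityMeasure Y)), MeasurableSet A → MeasurableSet B →
      IsProbabilityMeasure ρ → IsProbabilityMeasure ρ' → (∀ᵐ w ∂ρ, w.1 ∈ A) →
      (∀ᵐ w ∂ρ', w.2 ∈ B) → ∀ᵐ w ∂(ρ.fst.prod ρ'.snd), w.1 ∈ A ∧ w.2 ∈ B := by
    intro ρ ρ' A B mA mB _ _ hA hB
    have hA' : ∀ᵐ x ∂ρ.fst, x ∈ A := (ae_map_iff measurable_fst.aemeasurable mA).mpr hA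
    have hB' : ∀ᵐ x ∂ρ'.snd, x ∈ B := (ae_map_iff measurable_snd.aemeasurable mB).mpr hB
    exact (Measure.quasiMeasurePreserving_fst.ae hA').and
      (Measure.quasiMeasurePreserving_snd.ae hB')
  have u₁ := upper (ρ₁.fst.prod ρ₂.snd) (c (a₁, b₂) + δ / 4) inferInstance
    ((cross ρ₁ ρ₂ A₁ _ oA₁.measurableSet mgB₂ inferInstance inferInstance
      (ae₁.mono fun w hw => hw.1) (ae₂.mono fun w hw => hw.2)).mono fun w hw => by
    have := k12 w.1 (hA₁ hw.1).2 (g w.2) (hB₂ hw.2).1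
    linarith [(abs_le.mp this).2])
  have u₂ := upper (ρ₂.fst.prod ρ₁.snd) (c (a₂, b₁) + δ / 4) inferInstance
    ((cross ρ₂ ρ₁ A₂ _ oA₂.measurableSet mgB₁ inferInstance inferInstance
      (ae₂.mono fun w hw => hw.1) (ae₁.mono fun w hw => hw.2)).mono fun w hw => by
    have := k21 w.1 (hA₂ hw.1).1 (g w.2) (hB₁ hw.2).2
    linarith [(abs_le.mp this).2])
  -- the lower bounds may be negative, where `ofReal` is only subadditive
  have fin := ((ENNReal.ofReal_add_le (p := c (a₁, b₁) - δ / 4) (q := c (a₂, b₂) - δ / 4)).trans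
    (add_le_add l₁ l₂)).trans (key.trans (add_le_add u₁ u₂))
  have n12 := hc0 (a₁, b₂)
  have n21 := hc0 (a₂, b₁)
  rw [← ENNReal.ofReal_add (by positivity) (by positivity),
    ENNReal.ofReal_le_ofReal_iff (by positivity)] at fin
  linarith

end

/-! ### Multivalued points of a monotone set -/

section

section dim
variable {F : Type*} [NormedAddCommGroup F] [InnerProductSpace ℝ F] [FiniteDimensional ℝ F]

/-- Along the segment from `x` to `y` the directional derivative of `Ψ` is strictly increasing. -/
lemma gradient_injective {Ψ : F → ℝ} (hconv : StrictConvexOn ℝ univ Ψ)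
    (hdiff : Differentiable ℝ Ψ) : Function.Injective (gradient Ψ) := by
  intro x y hxy
  by_contra hne
  have hv : y - x ≠ 0 := sub_ne_zero.mpr (Ne.symm hne)
  have hder : ∀ t : ℝ, HasDerivAt (fun t : ℝ => Ψ (x + t • (y - x)))
      (inner ℝ (gradient Ψ (x + t • (y - x))) (y - x)) t := by
    intro t
    have h1 := (hdiff (x + t • (y - x))).hasGradientAt.hasFDerivAt
    have h2 : HasDerivAt (fun t : ℝ => x + t • (y - x)) (y - x) t := by
      simpa using ((hasDerivAt_id t).smul_const (y - x)).const_add x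
    exact h1.comp_hasDerivAt t h2
  have hsc : StrictConvexOn ℝ univ (fun t : ℝ => Ψ (x + t • (y - x))) := by
    refine ⟨convex_univ, fun s _ t _ hst a b ha hb hab => ?_⟩
    have hne' : x + s • (y - x) ≠ x + t • (y - x) := by
      intro h
      exact hst (smul_left_injective ℝ hv (add_left_cancel h))
    have := hconv.2 (mem_univ (x + s • (y - x))) (mem_univ (x + t • (y - x))) hne' ha hb hab
    convert this using 2
    have : x = (a + b) • x := by rw [hab, one_smul]
    simp only [smul_eq_mul]
    nth_rw 1 [this]
    module
  have hmono := hsc.strictMonoOn_deriv fun t _ => (hder t).differentiableAt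
  have := hmono (mem_univ 0) (mem_univ 1) zero_lt_one
  rw [(hder 0).deriv, (hder 1).deriv] at this
  simp [hxy] at this

/-- Two-point cyclical monotonicity of `Γ ⊆ F × F` for the cost `(a, b) ↦ Ψ (b - a)`. -/
def CMon (Ψ : F → ℝ) (Γ : Set (F × F)) : Prop :=
  ∀ a₁ b₁ a₂ b₂, (a₁, b₁) ∈ Γ → (a₂, b₂) ∈ Γ →
    Ψ (b₁ - a₁) + Ψ (b₂ - a₂) ≤ Ψ (b₂ - a₁) + Ψ (b₁ - a₂)

/-- Near `(a₀, v₁, v₂)` with `v₁ ≠ v₂`, the points of `F` carrying two points of `Γ`, one near `v₁` and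
one near `v₂`, satisfy a cone condition around the direction
`w = ∇Ψ (v₂ - a₀) - ∇Ψ (v₁ - a₀)`: monotonicity applied to two such points `a`, `a'` bounds
`⟪w, a - a'⟫` by the first-order errors, which are small relative to `‖a - a'‖`. -/
lemma local_cone {Ψ : F → ℝ} (hconv : StrictConvexOn ℝ univ Ψ)
    (hdiff : Differentiable ℝ Ψ) (hgrad : Continuous (gradient Ψ)) {Γ : Set (F × F)}
    (hΓ : CMon Ψ Γ) (a₀ : F) {v₁ v₂ : F} (hne : v₁ ≠ v₂) :
    ∃ N ∈ 𝓝 (a₀, v₁, v₂), ∃ w : F, w ≠ 0 ∧ ∀ p ∈ N, ∀ q ∈ N,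
      (p.1, p.2.1) ∈ Γ → (p.1, p.2.2) ∈ Γ → (q.1, q.2.1) ∈ Γ → (q.1, q.2.2) ∈ Γ →
      |inner ℝ w (p.1 - q.1)| ≤ ‖w‖ / 2 * ‖p.1 - q.1‖ := by
  let w := gradient Ψ (v₂ - a₀) - gradient Ψ (v₁ - a₀)
  have hw : w ≠ 0 := by
    intro h
    have := gradient_injective hconv hdiff (sub_eq_zero.mp h)
    exact hne (sub_left_inj.mp this).symm
  have hstrict : ∀ x, ∃ r > 0, ∀ u ∈ Metric.ball x r, ∀ u' ∈ Metric.ball x r,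
      |Ψ u - Ψ u' - inner ℝ (gradient Ψ x) (u - u')| ≤ ‖w‖ / 4 * ‖u - u'‖ := by
    intro x
    have h := hasStrictFDerivAt_of_hasFDerivAt_of_continuousAt (f := Ψ)
      (f' := fun y => InnerProductSpace.toDual ℝ F (gradient Ψ y)) (x := x)
      (Eventually.of_forall fun y => (hdiff y).hasGradientAt.hasFDerivAt)
      ((InnerProductSpace.toDual ℝ F).continuous.comp hgrad).continuousAt
    have h2 := (hasStrictFDerivAt_iff_isLittleO.mp h).def (c := ‖w‖ / 4) (by positivity)
    rw [nhds_prod_eq] at h2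
    obtain ⟨s, hs, hs2⟩ := Filter.eventually_prod_self_iff'.mp h2
    obtain ⟨r, hr, hrs⟩ := Metric.mem_nhds_iff.mp hs
    refine ⟨r, hr, fun u hu u' hu' => ?_⟩
    simpa only [InnerProductSpace.toDual_apply_apply, Real.norm_eq_abs] using hs2 u (hrs hu) u' (hrs hu')
  obtain ⟨r₁, hr₁, h₁⟩ := hstrict (v₁ - a₀)
  obtain ⟨r₂, hr₂, h₂⟩ := hstrict (v₂ - a₀)
  let r := min r₁ r₂ / 2
  have hr : 0 < r := by positivity
  refine ⟨Metric.ball a₀ r ×ˢ Metric.ball v₁ r ×ˢ Metric.ball v₂ r,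
    prod_mem_nhds (Metric.ball_mem_nhds _ hr)
      (prod_mem_nhds (Metric.ball_mem_nhds _ hr) (Metric.ball_mem_nhds _ hr)), w, hw, ?_⟩
  have hb : ∀ v a b s, a ∈ Metric.ball a₀ r → b ∈ Metric.ball v r → min r₁ r₂ ≤ s →
      b - a ∈ Metric.ball (v - a₀) s := by
    intro v a b s ha hb hs
    rw [Metric.mem_ball, dist_eq_norm] at *
    calc ‖b - a - (v - a₀)‖ = ‖(b - v) - (a - a₀)‖ := by congr 1; abel
      _ ≤ ‖b - v‖ + ‖a - a₀‖ := norm_sub_le _ _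
      _ < r + r := add_lt_add hb ha
      _ = min r₁ r₂ := by simp [r]
      _ ≤ s := hs
  have one : ∀ p ∈ Metric.ball a₀ r ×ˢ Metric.ball v₁ r ×ˢ Metric.ball v₂ r,
      ∀ q ∈ Metric.ball a₀ r ×ˢ Metric.ball v₁ r ×ˢ Metric.ball v₂ r,
      (p.1, p.2.2) ∈ Γ → (q.1, q.2.1) ∈ Γ →
      inner ℝ w (q.1 - p.1) ≤ ‖w‖ / 2 * ‖p.1 - q.1‖ := by
    rintro ⟨a, b₁, b₂⟩ ⟨ha, hb₁, hb₂⟩ ⟨a', b₁', b₂'⟩ ⟨ha', hb₁', hb₂'⟩ hp hq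
    simp only at *
    -- monotonicity compares the upper point over `a` with the lower point over `a'`
    have m := hΓ a b₂ a' b₁' hp hq
    have e₂ := h₂ (b₂ - a) (hb v₂ a b₂ r₂ ha hb₂ (min_le_right _ _))
      (b₂ - a') (hb v₂ a' b₂ r₂ ha' hb₂ (min_le_right _ _))
    have e₁ := h₁ (b₁' - a) (hb v₁ a b₁' r₁ ha hb₁' (min_le_left _ _))
      (b₁' - a') (hb v₁ a' b₁' r₁ ha' hb₁' (min_le_left _ _))
    have s₂ : b₂ - a - (b₂ - a') = a' - a := by abel
    have s₁ : b₁' - a - (b₁' - a') = a' - a := by abel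
    rw [s₂] at e₂
    rw [s₁] at e₁
    have hw' : inner ℝ w (a' - a) = inner ℝ (gradient Ψ (v₂ - a₀)) (a' - a)
      - inner ℝ (gradient Ψ (v₁ - a₀)) (a' - a) := inner_sub_left _ _ _
    rw [norm_sub_rev a a']
    have := (abs_le.mp e₂).1
    have := (abs_le.mp e₁).2
    linarith
  intro p hp q hq hp1 hp2 hq1 hq2
  rw [abs_le]
  have t1 := one p hp q hq hp2 hq1
  have t2 := one q hq p hp hq2 hp1
  rw [norm_sub_rev q.1 p.1] at t2
  have t3 : inner ℝ w (q.1 - p.1) = - inner ℝ w (p.1 - q.1) := by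
    rw [← inner_neg_right, neg_sub]
  constructor <;> linarith

/-- Under the cone condition, the projection onto `wᗮ` has a Lipschitz inverse on `A`. -/
lemma antilipschitz_of_cone {A : Set F} {w : F} (hw : w ≠ 0)
    (hA : ∀ a ∈ A, ∀ b ∈ A, |inner ℝ w (a - b)| ≤ ‖w‖ / 2 * ‖a - b‖) :
    AntilipschitzWith 2 (fun a : A => (Submodule.span ℝ {w})ᗮ.orthogonalProjectionOnto (a : F)) := by
  refine AntilipschitzWith.of_le_mul_dist fun a b => ?_
  have h := hA a a.2 b b.2
  set x := (a : F) - b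
  have e := Submodule.norm_sq_eq_add_norm_sq_projection x (Submodule.span ℝ {w})
  have hd : dist ((Submodule.span ℝ {w})ᗮ.orthogonalProjectionOnto (a : F))
      ((Submodule.span ℝ {w})ᗮ.orthogonalProjectionOnto (b : F)) =
      ‖(Submodule.span ℝ {w})ᗮ.orthogonalProjectionOnto x‖ := by
    rw [dist_eq_norm, ← map_sub]
  have hp : ‖(Submodule.span ℝ {w}).orthogonalProjectionOnto x‖ ≤ ‖x‖ / 2 := by
    rw [← Submodule.norm_coe]
    have : ((Submodule.span ℝ {w}).orthogonalProjectionOnto x : F) =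
      (inner ℝ w x / (‖w‖ ^ 2 : ℝ)) • w := Submodule.starProjection_singleton ℝ x
    rw [this, norm_smul, Real.norm_eq_abs, abs_div, abs_of_pos (by positivity : 0 < ‖w‖ ^ 2)]
    have hwp : 0 < ‖w‖ := by positivity
    rw [div_mul_eq_mul_div, div_le_iff₀ (by positivity)]
    nlinarith
  rw [hd, Subtype.dist_eq, dist_eq_norm]
  change ‖x‖ ≤ 2 * _
  have n1 := norm_nonneg x
  have n2 := norm_nonneg ((Submodule.span ℝ {w}).orthogonalProjectionOnto x)
  have n3 := norm_nonneg ((Submodule.span ℝ {w})ᗮ.orthogonalProjectionOnto x)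
  refine abs_le_of_sq_le_sq' ?_ (by positivity) |>.2
  nlinarith

/-- The points lying below at least two points of `Γ`. -/
def multi (Γ : Set (F × F)) : Set F := {a | ∃ b₁ b₂, b₁ ≠ b₂ ∧ (a, b₁) ∈ Γ ∧ (a, b₂) ∈ Γ}

/-- `multi Γ` is covered by countably many Lipschitz graphs over hyperplanes. -/
lemma multi_subset {Ψ : F → ℝ} (hconv : StrictConvexOn ℝ univ Ψ)
    (hdiff : Differentiable ℝ Ψ) (hgrad : Continuous (gradient Ψ)) {Γ : Set (F × F)}
    (hΓ : CMon Ψ Γ) : ∃ (t : Set (F × F × F)) (A : F × F × F → Set F), t.Countable ∧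
      multi Γ ⊆ ⋃ i ∈ t, A i ∧ ∀ i ∈ t, ∃ w : F, w ≠ 0 ∧ AntilipschitzWith 2
        (fun a : A i => (Submodule.span ℝ {w})ᗮ.orthogonalProjectionOnto (a : F)) := by
  let T : Set (F × F × F) := {p | p.2.1 ≠ p.2.2}
  have h : ∀ p : F × F × F, ∃ N : Set (F × F × F), p ∈ T → (N ∈ 𝓝 p ∧ ∃ w : F, w ≠ 0 ∧
      ∀ p ∈ N, ∀ q ∈ N,
      (p.1, p.2.1) ∈ Γ → (p.1, p.2.2) ∈ Γ → (q.1, q.2.1) ∈ Γ → (q.1, q.2.2) ∈ Γ →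
      |inner ℝ w (p.1 - q.1)| ≤ ‖w‖ / 2 * ‖p.1 - q.1‖) := by
    rintro ⟨a, v₁, v₂⟩
    by_cases hp : v₁ = v₂
    · exact ⟨univ, fun h => absurd hp h⟩
    · obtain ⟨N, hN, h⟩ := local_cone hconv hdiff hgrad hΓ a hp
      exact ⟨N, fun _ => ⟨hN, h⟩⟩
  choose N hN using h
  obtain ⟨t, htT, htc, htcov⟩ := TopologicalSpace.countable_cover_nhdsWithin (s := T) (f := N)
    fun p hp => mem_nhdsWithin_of_mem_nhds (hN p hp).1
  refine ⟨t, fun p => {a | ∃ b₁ b₂, (a, b₁, b₂) ∈ N p ∧ (a, b₁) ∈ Γ ∧ (a, b₂) ∈ Γ}, htc, ?_, ?_⟩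
  · rintro a ⟨b₁, b₂, hne, h1, h2⟩
    have := htcov (show (a, b₁, b₂) ∈ T from hne)
    obtain ⟨p, hp, hpN⟩ := mem_iUnion₂.mp this
    exact mem_iUnion₂.mpr ⟨p, hp, b₁, b₂, hpN, h1, h2⟩
  · intro p hp
    obtain ⟨w, hw, hw2⟩ := (hN p (htT hp)).2
    refine ⟨w, hw, antilipschitz_of_cone hw ?_⟩
    rintro a ⟨b₁, b₂, hab, h1, h2⟩ a' ⟨b₁', b₂', hab', h1', h2'⟩
    exact hw2 _ hab _ hab' h1 h2 h1' h2'

lemma finrank_orth {n : ℕ} (hn : Module.finrank ℝ F = n + 1) {w : F} (hw : w ≠ 0) :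
    Module.finrank ℝ (Submodule.span ℝ {w})ᗮ = n := by
  have : Fact (Module.finrank ℝ F = n + 1) := ⟨hn⟩
  exact Submodule.finrank_orthogonal_span_singleton hw

lemma dimH_multi_le {Ψ : F → ℝ} (hconv : StrictConvexOn ℝ univ Ψ)
    (hdiff : Differentiable ℝ Ψ) (hgrad : Continuous (gradient Ψ)) {Γ : Set (F × F)}
    (hΓ : CMon Ψ Γ) {n : ℕ} (hn : Module.finrank ℝ F = n + 1) : dimH (multi Γ) ≤ n := by
  obtain ⟨t, A, htc, hcov, hA⟩ := multi_subset hconv hdiff hgrad hΓ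
  refine (dimH_mono hcov).trans ?_
  rw [dimH_bUnion htc]
  refine iSup₂_le fun i hi => ?_
  obtain ⟨w, hw, hanti⟩ := hA i hi
  have h1 := hanti.le_dimH_image univ
  rw [← isometry_subtype_coe.dimH_image, image_univ, Subtype.range_coe] at h1
  refine h1.trans ((dimH_mono (subset_univ _)).trans ?_)
  rw [Real.dimH_univ_eq_finrank, finrank_orth hn hw]

lemma countable_multi {Ψ : F → ℝ} (hconv : StrictConvexOn ℝ univ Ψ)
    (hdiff : Differentiable ℝ Ψ) (hgrad : Continuous (gradient Ψ)) {Γ : Set (F × F)}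
    (hΓ : CMon Ψ Γ) (hn : Module.finrank ℝ F = 1) : (multi Γ).Countable := by
  obtain ⟨t, A, htc, hcov, hA⟩ := multi_subset hconv hdiff hgrad hΓ
  refine (htc.biUnion fun i hi => ?_).mono hcov
  obtain ⟨w, hw, hanti⟩ := hA i hi
  have : Subsingleton (Submodule.span ℝ {w})ᗮ := Module.finrank_zero_iff.mp (finrank_orth hn hw)
  refine Set.Subsingleton.countable fun a ha b hb => ?_
  have := hanti.injective (a₁ := ⟨a, ha⟩) (a₂ := ⟨b, hb⟩) (Subsingleton.elim _ _)
  exact congrArg Subtype.val this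

end dim

end

/-! ### Barycenters of measures carried by closed convex sets -/

section

variable {Y : Type*} [MeasurableSpace Y] [TopologicalSpace Y] [PolishSpace Y] [BorelSpace Y]

lemma integral_bar (Q : Measure (ProbabilityMeasure Y)) [IsProbabilityMeasure Q]
    (φ : BoundedContinuousFunction Y ℝ) :
    ∫ y, φ y ∂(bar Q) = ∫ p, ∫ y, φ y ∂(p : Measure Y) ∂Q := by
  let κ : ProbabilityTheory.Kernel (ProbabilityMeasure Y) Y := ⟨_, measurable_toMeasure⟩
  have : ProbabilityTheory.IsMarkovKernel κ := ⟨fun p => p.2⟩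
  have e : bar Q = (κ.comp (ProbabilityTheory.Kernel.const Unit Q)) () := by
    rw [ProbabilityTheory.Kernel.comp_apply]; rfl
  have h := ProbabilityTheory.Kernel.integral_comp (η := κ)
    (κ := ProbabilityTheory.Kernel.const Unit Q) (a := ()) (f := φ)
    (by rw [← e]; exact φ.integrable _)
  rw [← e] at h
  exact h

/-- The barycenter of a probability measure carried by a closed convex set `L ⊆ 𝒫(Y)` belongs
to `L`. A basic neighbourhood of the barycenter involves finitely many test functions, so the
claim reduces to the corresponding fact in `ℝ^I` with `I` finite. -/
lemma bar_mem_of_convex (Q : Measure (ProbabilityMeasure Y)) [IsProbabilityMeasure Q]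
    {L : Set (ProbabilityMeasure Y)} (hL : IsClosed L)
    (hconv : ∀ p₁ ∈ L, ∀ p₂ ∈ L, ∀ p : ProbabilityMeasure Y, ∀ t : ℝ, 0 ≤ t → t ≤ 1 →
      (p : Measure Y) = ENNReal.ofReal t • (p₁ : Measure Y)
          + ENNReal.ofReal (1 - t) • (p₂ : Measure Y) → p ∈ L)
    (hQ : ∀ᵐ p ∂Q, p ∈ L) : (⟨bar Q, inferInstance⟩ : ProbabilityMeasure Y) ∈ L := by
  by_contra hnot
  obtain ⟨O, hO, hOL⟩ := (isInducing_integral (Y := Y)).isOpen_iff.mp hL.isOpen_compl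
  have hmem : (⟨bar Q, inferInstance⟩ : ProbabilityMeasure Y) ∈ Lᶜ := hnot
  rw [← hOL] at hmem
  obtain ⟨I, u, hu, hIu⟩ := isOpen_pi_iff.mp hO _ hmem
  let J : ProbabilityMeasure Y → (I → ℝ) := fun p i => ∫ y, i.1 y ∂(p : Measure Y)
  have hJc : ∀ i, Continuous fun p => J p i := fun i =>
    ProbabilityMeasure.continuous_integral_boundedContinuousFunction i.1
  have hJi : ∀ i, Integrable (fun p => J p i) Q := by
    intro i
    refine Integrable.of_bound (hJc i).measurable.aestronglyMeasurable ‖i.1‖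
      (Eventually.of_forall fun p => ?_)
    have := norm_integral_le_of_norm_le_const (μ := (p : Measure Y)) (f := i.1) (C := ‖i.1‖)
      (Eventually.of_forall fun y => i.1.norm_coe_le_norm y)
    simpa using this
  have hJint : (∫ p, J p ∂Q) = fun i : I => ∫ y, i.1 y ∂(bar Q) := by
    funext i
    rw [eval_integral hJi, integral_bar]
  have hJconv : Convex ℝ (J '' L) := by
    rintro _ ⟨p₁, h₁, rfl⟩ _ ⟨p₂, h₂, rfl⟩ a b ha hb hab
    have hp : IsProbabilityMeasure (ENNReal.ofReal a • (p₁ : Measure Y)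
          + ENNReal.ofReal (1 - a) • (p₂ : Measure Y)) := ⟨by
      have : 1 - a = b := by linarith
      simp [this, ← ENNReal.ofReal_add ha hb, hab]⟩
    refine ⟨⟨_, hp⟩, hconv p₁ h₁ p₂ h₂ _ a ha (by linarith) rfl, ?_⟩
    funext i
    have h1 : Integrable i.1 (ENNReal.ofReal a • (p₁ : Measure Y)) :=
      (i.1.integrable _).smul_measure ENNReal.ofReal_ne_top
    have h2 : Integrable i.1 (ENNReal.ofReal (1 - a) • (p₂ : Measure Y)) :=
      (i.1.integrable _).smul_measure ENNReal.ofReal_ne_top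
    have hb' : 1 - a = b := by linarith
    change ∫ y, i.1 y ∂(ENNReal.ofReal a • (p₁ : Measure Y)
          + ENNReal.ofReal (1 - a) • (p₂ : Measure Y)) = _
    rw [integral_add_measure h1 h2, integral_smul_measure, integral_smul_measure,
      ENNReal.toReal_ofReal ha, ENNReal.toReal_ofReal (by linarith), hb']
    rfl
  have hmemc := hJconv.closure.integral_mem isClosed_closure
    (hQ.mono fun p hp => subset_closure (mem_image_of_mem J hp))
    (Integrable.of_eval hJi)
  rw [hJint] at hmemc
  obtain ⟨_, hx, p, hp, rfl⟩ := mem_closure_iff.mp hmemc (univ.pi fun i : I => u i.1)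
    (isOpen_set_pi finite_univ fun i _ => (hu i.1 i.2).1) (fun i _ => (hu i.1 i.2).2)
  have : p ∈ Lᶜ := by
    rw [← hOL]
    exact hIu fun i hi => hx ⟨i, hi⟩ (mem_univ _)
  exact this hp

end

/-! ### Transport from an atomless measure -/

section

lemma continuous_cdf (P : Measure ℝ) [IsProbabilityMeasure P] [NullSingletonClass P] :
    Continuous (ProbabilityTheory.cdf P) := by
  rw [continuous_iff_continuousAt]
  intro x
  refine continuousAt_iff_continuous_left'_right'.mpr ⟨?_, ?_⟩
  · rw [(ProbabilityTheory.monotone_cdf P).continuousWithinAt_Iio_iff_leftLim_eq]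
    have h := (ProbabilityTheory.cdf P).measure_singleton x
    rw [ProbabilityTheory.measure_cdf, measure_singleton, eq_comm, ENNReal.ofReal_eq_zero] at h
    exact le_antisymm ((ProbabilityTheory.monotone_cdf P).leftLim_le le_rfl) (by linarith)
  · exact continuousWithinAt_Ioi_iff_Ici.mpr ((ProbabilityTheory.cdf P).right_continuous x)

/-- The distribution function of an atomless law on `ℝ` is uniformly distributed. -/
lemma map_cdf (P : Measure ℝ) [IsProbabilityMeasure P] [NullSingletonClass P] :
    P.map (ProbabilityTheory.cdf P) = volume.restrict (Icc 0 1) := by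
  have hc := continuous_cdf P
  have : IsProbabilityMeasure (P.map (ProbabilityTheory.cdf P)) :=
    Measure.isProbabilityMeasure_map hc.measurable.aemeasurable
  refine Measure.ext_of_Iic _ _ fun t => ?_
  rw [Measure.map_apply hc.measurable measurableSet_Iic, Measure.restrict_apply measurableSet_Iic]
  rcases lt_or_ge t 0 with ht | ht
  · have e1 : ProbabilityTheory.cdf P ⁻¹' Iic t = ∅ := by
      ext x
      simp only [mem_preimage, mem_Iic, mem_empty_iff_false, iff_false, not_le]
      exact ht.trans_le (ProbabilityTheory.cdf_nonneg P x)
    have e2 : Iic t ∩ Icc (0 : ℝ) 1 = ∅ := by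
      ext x
      simp only [mem_inter_iff, mem_Iic, mem_Icc, mem_empty_iff_false, iff_false]
      rintro ⟨h1, h2, _⟩; linarith
    rw [e1, e2]; simp
  rcases le_or_gt 1 t with ht1 | ht1
  · have e1 : ProbabilityTheory.cdf P ⁻¹' Iic t = univ := by
      ext x
      simp only [mem_preimage, mem_Iic, mem_univ, iff_true]
      exact (ProbabilityTheory.cdf_le_one P x).trans ht1
    have e2 : Iic t ∩ Icc (0 : ℝ) 1 = Icc 0 1 := by
      ext x
      simp only [mem_inter_iff, mem_Iic, mem_Icc, and_iff_right_iff_imp]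
      rintro ⟨_, h⟩; linarith
    rw [e1, e2]; simp
  have e2 : Iic t ∩ Icc (0 : ℝ) 1 = Icc 0 t := by
    ext x
    simp only [mem_inter_iff, mem_Iic, mem_Icc]
    constructor
    · rintro ⟨h1, h2, _⟩; exact ⟨h2, h1⟩
    · rintro ⟨h1, h2⟩; exact ⟨h2, h1, by linarith⟩
  rw [e2, Real.volume_Icc, sub_zero]
  rcases (ProbabilityTheory.cdf P ⁻¹' Iic t).eq_empty_or_nonempty with he | hne
  · have : t ≤ 0 := ge_of_tendsto' (ProbabilityTheory.tendsto_cdf_atBot P) fun x => by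
      by_contra h
      have hx : x ∈ ProbabilityTheory.cdf P ⁻¹' Iic t := (not_le.mp h).le
      rw [he] at hx; exact hx
    rw [he, le_antisymm this ht]; simp
  · have hcl : IsClosed (ProbabilityTheory.cdf P ⁻¹' Iic t) := isClosed_Iic.preimage hc
    have hbdd : BddAbove (ProbabilityTheory.cdf P ⁻¹' Iic t) := by
      obtain ⟨M, hM⟩ := ((ProbabilityTheory.tendsto_cdf_atTop P).eventually
        (lt_mem_nhds ht1)).exists
      refine ⟨M, fun x hx => ?_⟩
      by_contra h
      exact absurd (hM.trans_le (ProbabilityTheory.monotone_cdf P (not_le.mp h).le)) (not_lt.mpr hx)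
    set s := sSup (ProbabilityTheory.cdf P ⁻¹' Iic t) with hs
    have hmem : ProbabilityTheory.cdf P s ≤ t := hcl.csSup_mem hne hbdd
    have hset : ProbabilityTheory.cdf P ⁻¹' Iic t = Iic s := by
      refine Subset.antisymm (fun x hx => le_csSup hbdd hx) fun x hx => ?_
      exact (ProbabilityTheory.monotone_cdf P hx).trans hmem
    have hval : ProbabilityTheory.cdf P s = t := by
      refine le_antisymm hmem ?_
      refine ge_of_tendsto (x := 𝓝[>] s) (hc.continuousWithinAt) ?_
      filter_upwards [self_mem_nhdsWithin] with x hx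
      by_contra h
      exact absurd (le_csSup hbdd (show x ∈ ProbabilityTheory.cdf P ⁻¹' Iic t from (not_le.mp h).le))
        (not_le.mpr hx)
    rw [hset, ← ProbabilityTheory.ofReal_cdf, hval]

/-- Any law `q` is, up to normalisation, a pushforward of any atomless finite measure: pass through
the uniform law on the unit interval. -/
lemma exists_map_eq_smul {X Z : Type*} [MeasurableSpace X] [StandardBorelSpace X]
    [MeasurableSpace Z] [StandardBorelSpace Z] (m : Measure X) [IsFiniteMeasure m]
    [NullSingletonClass m] (q : Measure Z) [IsProbabilityMeasure q] :
    ∃ S : X → Z, Measurable S ∧ m.map S = m univ • q := by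
  have hZ : Nonempty Z := nonempty_of_isProbabilityMeasure q
  by_cases h0 : m = 0
  · exact ⟨fun _ => hZ.some, measurable_const, by simp [h0]⟩
  have hm0 : m univ ≠ 0 := by simpa using h0
  have hh := measurableEmbedding_embeddingReal X
  let P : Measure X := (m univ)⁻¹ • m
  have hP : IsProbabilityMeasure P := ⟨by
    simp [P, ENNReal.inv_mul_cancel hm0 (measure_ne_top m univ)]⟩
  let P' : Measure ℝ := P.map (embeddingReal X)
  have hP' : IsProbabilityMeasure P' :=
    Measure.isProbabilityMeasure_map hh.measurable.aemeasurable
  have hna : NullSingletonClass P' := ⟨fun x => by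
    rw [Measure.map_apply hh.measurable (measurableSet_singleton x)]
    have hsub : (embeddingReal X ⁻¹' {x}).Subsingleton :=
      subsingleton_singleton.preimage hh.injective
    simp only [P, Measure.smul_apply, smul_eq_mul]
    rw [hsub.measure_zero, mul_zero]⟩
  have hc := continuous_cdf P'
  let U : ℝ → unitInterval := fun x => ⟨ProbabilityTheory.cdf P' x,
    ProbabilityTheory.cdf_nonneg P' x, ProbabilityTheory.cdf_le_one P' x⟩
  have hU : Measurable U := hc.measurable.subtype_mk
  have hUmap : P'.map U = volume := by
    apply unitInterval.measurableEmbedding_coe.map_injective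
    rw [Measure.map_map unitInterval.measurableEmbedding_coe.measurable hU,
      unitInterval.measurePreserving_coe.map_eq]
    exact map_cdf P'
  obtain ⟨T, hT, hTq⟩ := Measure.exists_measurable_map_eq q
  refine ⟨T ∘ U ∘ embeddingReal X, hT.comp (hU.comp hh.measurable), ?_⟩
  have e : P.map (T ∘ U ∘ embeddingReal X) = q := by
    rw [← Measure.map_map hT (hU.comp hh.measurable), ← Measure.map_map hU hh.measurable]
    change (P'.map U).map T = q
    rw [hUmap, hTq]
  have hmP : m = m univ • P := by
    simp only [P, smul_smul]
    rw [ENNReal.mul_inv_cancel hm0 (measure_ne_top m univ), one_smul]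
  conv_lhs => rw [hmP]
  rw [Measure.map_smul, e]

end

/-! ### From a relaxed minimizer to a coupling -/

section

instance nonempty_pm {Y : Type*} [MeasurableSpace Y] [Nonempty Y] :
    Nonempty (ProbabilityMeasure Y) := ‹Nonempty Y›.map fun y => ⟨Measure.dirac y, inferInstance⟩

section coupling
variable {X Y : Type*} [MeasurableSpace X] [MeasurableSpace Y] [StandardBorelSpace Y] [Nonempty Y]

lemma measurable_condMeas (σ : ProbabilityMeasure (X × Y)) : Measurable (condMeas σ) :=
  Measurable.subtype_mk (σ : Measure (X × Y)).condKernel.measurable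

/-- The barycenter of the law of `σ^x` is the second marginal of `σ`. -/
lemma bar_map_condMeas (σ : ProbabilityMeasure (X × Y)) :
    bar (((σ : Measure (X × Y)).map Prod.fst).map (condMeas σ)) =
      (σ : Measure (X × Y)).map Prod.snd := by
  ext s hs
  rw [bar_apply _ hs, lintegral_map (f := fun p : ProbabilityMeasure Y => (p : Measure Y) s)
    ((Measure.measurable_coe hs).comp measurable_toMeasure) (measurable_condMeas σ)]
  conv_rhs => rw [← (σ : Measure (X × Y)).disintegrate (σ : Measure (X × Y)).condKernel]
  rw [Measure.map_apply measurable_snd hs, Measure.compProd_apply (measurable_snd hs)]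
  rfl

/-- Every measurable `V : X → 𝒫(Y)` is the disintegration of a coupling. -/
lemma exists_coupling (μ : Measure X) [IsProbabilityMeasure μ] {V : X → ProbabilityMeasure Y}
    (hV : Measurable V) : ∃ σ : ProbabilityMeasure (X × Y),
      (σ : Measure (X × Y)).map Prod.fst = μ ∧
      (σ : Measure (X × Y)).map Prod.snd = bar (μ.map V) ∧
      ∀ᵐ x ∂μ, condMeas σ x = V x := by
  let κ : ProbabilityTheory.Kernel X Y := ⟨fun x => V x, measurable_toMeasure.comp hV⟩
  have : ProbabilityTheory.IsMarkovKernel κ := ⟨fun x => (V x).2⟩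
  have hfst : (μ.compProd κ).map Prod.fst = μ := Measure.fst_compProd μ κ
  have hae : ∀ᵐ x ∂μ, κ x = (μ.compProd κ).condKernel x := by
    have h := ProbabilityTheory.eq_condKernel_of_measure_eq_compProd (ρ := μ.compProd κ) κ
      (by rw [Measure.fst_compProd])
    rwa [Measure.fst_compProd] at h
  obtain ⟨σ, hσ⟩ : ∃ σ : ProbabilityMeasure (X × Y), (σ : Measure (X × Y)) = μ.compProd κ :=
    ⟨⟨μ.compProd κ, inferInstance⟩, rfl⟩
  rw [← hσ] at hfst
  have hcond : ∀ᵐ x ∂μ, condMeas σ x = V x := by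
    filter_upwards [hae] with x hx
    refine Subtype.ext ?_
    simp only [← hσ] at hx
    exact hx.symm
  refine ⟨σ, hfst, ?_, hcond⟩
  rw [← bar_map_condMeas, hfst, Measure.map_congr hcond]

end coupling

/-- A measurable selection that equals `W ∘ f` off the countable set `D`, while on each
fibre `f = a` with `a ∈ D` it has conditional law `Q a`; this is possible since the fibre carries no
atom of `μ`. -/
lemma exists_selection {X Z E : Type*} [MeasurableSpace X] [StandardBorelSpace X]
    [MeasurableSpace Z] [StandardBorelSpace Z] [MeasurableSpace E] [MeasurableSingletonClass E]
    (μ : Measure X) [IsProbabilityMeasure μ] {f : X → E} (hf : Measurable f)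
    (Q : ProbabilityTheory.Kernel E Z) [ProbabilityTheory.IsMarkovKernel Q]
    {D : Set E} (hD : D.Countable) (hμ : D.Nonempty → NullSingletonClass μ)
    {W : E → Z} (hW : Measurable W) :
    ∃ V : X → Z, Measurable V ∧ (∀ x, f x ∉ D → V x = W (f x)) ∧
      ∀ H : E × Z → ℝ≥0∞, Measurable H →
        ∫⁻ x in f ⁻¹' D, H (f x, V x) ∂μ =
          ∫⁻ x in f ⁻¹' D, ∫⁻ p, H (f x, p) ∂(Q (f x)) ∂μ := by
  classical
  have hS : ∀ a, ∃ S : X → Z, a ∈ D → (Measurable S ∧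
      (μ.restrict (f ⁻¹' {a})).map S = μ (f ⁻¹' {a}) • Q a) := by
    intro a
    by_cases ha : a ∈ D
    · have := hμ ⟨a, ha⟩
      have : NullSingletonClass (μ.restrict (f ⁻¹' {a})) := inferInstance
      obtain ⟨S, hS, h⟩ := exists_map_eq_smul (μ.restrict (f ⁻¹' {a})) (Q a)
      exact ⟨S, fun _ => ⟨hS, by rw [h, Measure.restrict_apply_univ]⟩⟩
    · exact ⟨fun _ => W a, fun h => absurd h ha⟩
  choose S hS using hS
  let V : X → Z := fun x => if f x ∈ D then S (f x) x else W (f x)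
  refine ⟨V, ?_, fun x hx => if_neg hx, ?_⟩
  · intro s hs
    have e : V ⁻¹' s = (⋃ a ∈ D, f ⁻¹' {a} ∩ S a ⁻¹' s) ∪ ((f ⁻¹' D)ᶜ ∩ (fun x => W (f x)) ⁻¹' s) := by
      ext x
      by_cases hx : f x ∈ D
      · simp [V, hx]
      · have : ∀ a ∈ D, f x ≠ a := fun a ha h => hx (h ▸ ha)
        simp [V, hx]
    rw [e]
    refine (MeasurableSet.biUnion hD fun a ha => ?_).union
      ((hf hD.measurableSet).compl.inter ((hW.comp hf) hs))
    exact (hf (measurableSet_singleton a)).inter ((hS a ha).1 hs)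
  · intro H hH
    have e : f ⁻¹' D = ⋃ a ∈ D, f ⁻¹' {a} := by ext x; simp
    have hdisj : D.PairwiseDisjoint fun a => f ⁻¹' {a} := by
      intro a _ b _ hab
      exact (disjoint_singleton.mpr hab).preimage f
    have hm : ∀ a ∈ D, MeasurableSet (f ⁻¹' {a}) := fun a _ => hf (measurableSet_singleton a)
    rw [e, lintegral_biUnion hD hm hdisj, lintegral_biUnion hD hm hdisj]
    refine tsum_congr fun ⟨a, ha⟩ => ?_
    have hHa : Measurable fun p => H (a, p) := hH.comp measurable_prodMk_left
    have h1 : ∫⁻ x in f ⁻¹' {a}, H (f x, V x) ∂μ = ∫⁻ x in f ⁻¹' {a}, H (a, S a x) ∂μ := by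
      refine setLIntegral_congr_fun (hm a ha) fun x hx => ?_
      have hx : f x = a := hx
      simp [V, hx, ha]
    have h2 : ∫⁻ x in f ⁻¹' {a}, ∫⁻ p, H (f x, p) ∂(Q (f x)) ∂μ =
        ∫⁻ x in f ⁻¹' {a}, ∫⁻ p, H (a, p) ∂(Q a) ∂μ := by
      refine setLIntegral_congr_fun (hm a ha) fun x hx => ?_
      have hx : f x = a := hx
      simp only [hx]
    rw [h1, h2, setLIntegral_const, ← lintegral_map (f := fun p => H (a, p)) hHa (hS a ha).1,
      (hS a ha).2, lintegral_smul_measure, smul_eq_mul, mul_comm]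

section main
variable {X Y E : Type*}
  [MeasurableSpace X] [TopologicalSpace X] [PolishSpace X] [BorelSpace X]
  [MeasurableSpace Y] [TopologicalSpace Y] [PolishSpace Y] [BorelSpace Y] [Nonempty Y]
  [MeasurableSpace E] [TopologicalSpace E] [PolishSpace E] [BorelSpace E]

/-- A lower bound for the relaxed problem is one for the problem over couplings. -/
lemma relaxed_le {μ : Measure X} [IsProbabilityMeasure μ] {ν : Measure Y} {f : X → E}
    (hf : Measurable f) {H : E × ProbabilityMeasure Y → ℝ≥0∞} (hH : Measurable H) {C : ℝ≥0∞}
    (hC : ∀ S : Measure (E × ProbabilityMeasure Y), IsProbabilityMeasure S →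
      Adm (μ.map f) ν S → C ≤ ∫⁻ w, H w ∂S)
    {σ : ProbabilityMeasure (X × Y)} (h₁ : (σ : Measure (X × Y)).map Prod.fst = μ)
    (h₂ : (σ : Measure (X × Y)).map Prod.snd = ν) :
    C ≤ ∫⁻ x, H (f x, condMeas σ x) ∂μ := by
  have hm : Measurable fun x => (f x, condMeas σ x) := hf.prodMk (measurable_condMeas σ)
  have h := hC (μ.map fun x => (f x, condMeas σ x))
    (Measure.isProbabilityMeasure_map hm.aemeasurable) ⟨?_, ?_⟩
  · rwa [lintegral_map hH hm] at h
  · exact Measure.fst_map_prodMk (measurable_condMeas σ)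
  · rw [Measure.snd_map_prodMk hf, ← h₂, ← bar_map_condMeas, h₁]

/-- An admissible relaxed plan `R` can be replaced by a coupling of the same cost, provided that
for almost every `x` with `f x ∉ D` the map `g` is almost surely constant under the conditional
law of `R` given `f x`. There the conditional law is replaced by its barycenter, which stays in the
same level set of `g`; over `D` it is realised exactly by `exists_selection`. -/
lemma exists_collapse (μ : Measure X) [IsProbabilityMeasure μ] {ν : Measure Y} {f : X → E}
    (hf : Measurable f) {R : Measure (E × ProbabilityMeasure Y)} [IsProbabilityMeasure R]
    (hR : Adm (μ.map f) ν R) {F : Type*} [TopologicalSpace F] [T1Space F] [MeasurableSpace F]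
    [BorelSpace F]
    {g : ProbabilityMeasure Y → F} (hg : Continuous g)
    (hlevel : ∀ c, ∀ p₁ p₂ p : ProbabilityMeasure Y, ∀ t : ℝ,
      0 ≤ t → t ≤ 1 → g p₁ = c → g p₂ = c →
      (p : Measure Y) = ENNReal.ofReal t • (p₁ : Measure Y)
          + ENNReal.ofReal (1 - t) • (p₂ : Measure Y) → g p = c)
    {D : Set E} (hD : D.Countable) (hμ : D.Nonempty → NullSingletonClass μ)
    (hsingle : ∀ᵐ x ∂μ, f x ∉ D →
      ∃ b, ∀ᵐ p ∂(R.condKernel (f x)), g p = b)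
    {c : E × F → ℝ≥0∞} (hc : Measurable c) :
    ∃ σ : ProbabilityMeasure (X × Y),
      (σ : Measure (X × Y)).map Prod.fst = μ ∧ (σ : Measure (X × Y)).map Prod.snd = ν ∧
      ∫⁻ x, c (f x, g (condMeas σ x)) ∂μ = ∫⁻ w, c (w.1, g w.2) ∂(R) := by
  let Q := R.condKernel
  let W : E → ProbabilityMeasure Y := fun a => ⟨bar (Q a), inferInstance⟩
  have hWm : Measurable W := by
    refine Measurable.subtype_mk (Measure.measurable_of_measurable_coe _ fun s hs => ?_)
    simp only [bar_apply _ hs]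
    exact ((Measure.measurable_coe hs).comp measurable_toMeasure).lintegral_kernel
  obtain ⟨V, hV, hVD, hVH⟩ := exists_selection μ hf Q hD hμ hWm
  have hDm : MeasurableSet (f ⁻¹' D) := hf hD.measurableSet
  -- applied below to the cost and to `(a, p) ↦ p s`, which is affine in `p`
  have key : ∀ H : E × ProbabilityMeasure Y → ℝ≥0∞, Measurable H →
      (∀ᵐ x ∂μ, f x ∉ D → H (f x, W (f x)) = ∫⁻ p, H (f x, p) ∂(Q (f x))) →
      ∫⁻ x, H (f x, V x) ∂μ = ∫⁻ w, H w ∂(R) := by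
    intro H hH hae
    have h1 : ∫⁻ w, H w ∂(R) = ∫⁻ x, ∫⁻ p, H (f x, p) ∂(Q (f x)) ∂μ := by
      conv_lhs => rw [← R.disintegrate R.condKernel]
      have : R.fst = μ.map f := hR.1
      rw [Measure.lintegral_compProd hH, this]
      exact lintegral_map hH.lintegral_kernel_prod_right' hf
    rw [h1, ← lintegral_add_compl _ hDm, ← lintegral_add_compl (fun x => ∫⁻ p, _ ∂(_)) hDm,
      hVH H hH]
    congr 1
    refine setLIntegral_congr_fun_ae hDm.compl ?_
    filter_upwards [hae] with x hx hxD
    rw [hVD x hxD, hx hxD]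
  obtain ⟨σ, h₁, h₂, h₃⟩ := exists_coupling μ hV
  refine ⟨σ, h₁, h₂.trans ?_, ?_⟩
  · ext s hs
    have hs' : Measurable fun p : ProbabilityMeasure Y => (p : Measure Y) s :=
      (Measure.measurable_coe hs).comp measurable_toMeasure
    rw [← hR.2, bar_apply _ hs, bar_apply _ hs, lintegral_map hs' hV, Measure.snd,
      lintegral_map hs' measurable_snd]
    refine key (fun w => (w.2 : Measure Y) s) (hs'.comp measurable_snd) ?_
    exact Eventually.of_forall fun x _ => bar_apply _ hs
  · have hcg : Measurable fun w : E × ProbabilityMeasure Y => c (w.1, g w.2) :=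
      hc.comp (measurable_fst.prodMk (hg.measurable.comp measurable_snd))
    rw [← key _ hcg]
    · refine lintegral_congr_ae ?_
      filter_upwards [h₃] with x hx
      simp only [hx]
    · filter_upwards [hsingle] with x hx hxD
      obtain ⟨b, hb⟩ := hx hxD
      have hbar : g (W (f x)) = b :=
        bar_mem_of_convex (Q (f x)) (L := g ⁻¹' {b}) (isClosed_singleton.preimage hg)
          (fun p₁ h₁ p₂ h₂ p t ht0 ht1 hp => hlevel b p₁ p₂ p t ht0 ht1 h₁ h₂ hp) hb
      have : ∫⁻ p, c (f x, g p) ∂(Q (f x)) = ∫⁻ p, c (f x, b) ∂(Q (f x)) := by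
        refine lintegral_congr_ae ?_
        filter_upwards [hb] with p hp
        rw [hp]
      simp only [hbar]
      rw [this, lintegral_const, measure_univ, mul_one]

/-- Over a point outside `multi Γ` the section of `Γ` has at most one element. -/
lemma ae_single {μ : Measure X} [IsProbabilityMeasure μ] {ν : Measure Y} {f : X → E}
    (hf : Measurable f) {R : Measure (E × ProbabilityMeasure Y)} [IsProbabilityMeasure R]
    (hR : Adm (μ.map f) ν R) {g : ProbabilityMeasure Y → E} {Γ : Set (E × E)}
    (hΓ : ∀ᵐ w ∂(R), (w.1, g w.2) ∈ Γ) :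
    ∀ᵐ x ∂μ, f x ∉ multi Γ → ∃ b, ∀ᵐ p ∂(R.condKernel (f x)), g p = b := by
  rw [← R.disintegrate R.condKernel] at hΓ
  have h := Measure.ae_ae_of_ae_compProd hΓ
  have h1 : R.fst = μ.map f := hR.1
  rw [h1] at h
  filter_upwards [ae_of_ae_map hf.aemeasurable h] with x hx hxm
  obtain ⟨p₀, hp₀⟩ := hx.exists
  refine ⟨g p₀, ?_⟩
  filter_upwards [hx] with p hp
  by_contra hne
  exact hxm ⟨g p, g p₀, hne, hp, hp₀⟩

end main

/-- The values of `f` over which `Γ` is multivalued are negligible, except in dimension one, where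
they are countable and `μ` has no atom. -/
lemma exists_exceptional {X : Type*} [MeasurableSpace X] {μ : Measure X} {d : ℕ}
    {f : X → EuclideanSpace ℝ (Fin d)} {Ψ : EuclideanSpace ℝ (Fin d) → ℝ}
    (hΨconv : StrictConvexOn ℝ univ Ψ) (hΨdiff : Differentiable ℝ Ψ)
    (hΨgrad : Continuous (gradient Ψ))
    {Γ : Set (EuclideanSpace ℝ (Fin d) × EuclideanSpace ℝ (Fin d))} (hΓ : CMon Ψ Γ)
    (hμdim : 1 < d → ∀ A : Set (EuclideanSpace ℝ (Fin d)),
      dimH A ≤ (d : ℝ≥0∞) - 1 → μ (f ⁻¹' A) = 0)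
    (hμatomless : d = 1 → NullSingletonClass μ) :
    ∃ D : Set (EuclideanSpace ℝ (Fin d)), D.Countable ∧
      (D.Nonempty → NullSingletonClass μ) ∧ ∀ᵐ x ∂μ, f x ∈ multi Γ → f x ∈ D := by
  match d with
  | 0 =>
    refine ⟨∅, countable_empty, fun h => absurd h (by simp), .of_forall fun x hx => ?_⟩
    obtain ⟨b₁, b₂, hne, -⟩ := hx
    exact absurd (Subsingleton.elim b₁ b₂) hne
  | 1 =>
    exact ⟨multi Γ, countable_multi hΨconv hΨdiff hΨgrad hΓ (by simp),
      fun _ => hμatomless rfl, .of_forall fun x hx => hx⟩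
  | n + 2 =>
    refine ⟨∅, countable_empty, fun h => absurd h (by simp), ?_⟩
    have h0 : μ (f ⁻¹' multi Γ) = 0 := by
      refine hμdim (by omega) _
        ((dimH_multi_le hΨconv hΨdiff hΨgrad hΓ (n := n + 1) (by simp)).trans ?_)
      push_cast
      rw [show ((n : ℝ≥0∞) + 2) = (n + 1) + 1 by ring, ENNReal.add_sub_cancel_right one_ne_top]
    filter_upwards [measure_eq_zero_iff_ae_notMem.mp h0] with x hx hx'
    exact absurd hx' hx

end

end NLK

open NLK

/-- **Existence for the nonlinear Kantorovich problem with cost `Ψ(g(σ^x) − f(x))`,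
case (i): convex level sets of `g`.** Let `X, Y` be Polish spaces, `μ, ν` Borel probability
measures, `f : X → ℝ^d` continuous, `g : 𝒫(Y) → ℝ^d` bounded continuous, `Ψ : ℝ^d → ℝ`
nonnegative strictly convex, differentiable with locally Lipschitz gradient. Assume `μ`
vanishes on preimages under `f` of sets of Hausdorff dimension at most `d − 1` if `d > 1`,
and `μ` is atomless if `d = 1`. If the level sets `{p : g(p) = c}` are convex, then the
infimum of `σ ↦ ∫ Ψ(g(σ^x) − f(x)) dμ` over `Π(μ,ν)` is attained. -/
theorem exists_min_nonlinear_kantorovich_levelSets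
    {X Y : Type*} [MeasurableSpace X] [TopologicalSpace X] [PolishSpace X] [BorelSpace X]
    [MeasurableSpace Y] [TopologicalSpace Y] [PolishSpace Y] [BorelSpace Y] [Nonempty Y]
    (μ : Measure X) [IsProbabilityMeasure μ] (ν : Measure Y) [IsProbabilityMeasure ν]
    {d : ℕ} (f : X → EuclideanSpace ℝ (Fin d)) (hf : Continuous f)
    (g : ProbabilityMeasure Y → EuclideanSpace ℝ (Fin d)) (hg : Continuous g)
    (hgbd : ∃ R : ℝ, ∀ p, ‖g p‖ ≤ R)
    (Ψ : EuclideanSpace ℝ (Fin d) → ℝ)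
    (hΨnonneg : ∀ v, 0 ≤ Ψ v)
    (hΨconv : StrictConvexOn ℝ Set.univ Ψ)
    (hΨdiff : Differentiable ℝ Ψ)
    (hΨgrad : LocallyLipschitz (fun v => gradient Ψ v))
    (hμdim : 1 < d → ∀ A : Set (EuclideanSpace ℝ (Fin d)),
      dimH A ≤ (d : ℝ≥0∞) - 1 → μ (f ⁻¹' A) = 0)
    (hμatomless : d = 1 → NoAtoms μ)
    -- the level sets {p ∈ 𝒫(Y) : g(p) = c} are convex for all c ∈ ℝ^d
    (hlevel : ∀ c : EuclideanSpace ℝ (Fin d), ∀ p₁ p₂ p : ProbabilityMeasure Y, ∀ t : ℝ,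
      0 ≤ t → t ≤ 1 → g p₁ = c → g p₂ = c →
      (p : Measure Y) = ENNReal.ofReal t • (p₁ : Measure Y)
          + ENNReal.ofReal (1 - t) • (p₂ : Measure Y) →
      g p = c) :
    ∃ σ : ProbabilityMeasure (X × Y),
      (σ : Measure (X × Y)).map Prod.fst = μ ∧
      (σ : Measure (X × Y)).map Prod.snd = ν ∧
      ∀ σ' : ProbabilityMeasure (X × Y),
        (σ' : Measure (X × Y)).map Prod.fst = μ →
        (σ' : Measure (X × Y)).map Prod.snd = ν →
        ∫⁻ x, ENNReal.ofReal (Ψ (g (condMeas σ x) - f x)) ∂μ ≤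
          ∫⁻ x, ENNReal.ofReal (Ψ (g (condMeas σ' x) - f x)) ∂μ := by
  have hΨc : Continuous Ψ := hΨdiff.continuous
  let c : EuclideanSpace ℝ (Fin d) × EuclideanSpace ℝ (Fin d) → ℝ := fun z => Ψ (z.2 - z.1)
  have hc : Continuous c := hΨc.comp (continuous_snd.sub continuous_fst)
  have hcg : Continuous fun w : EuclideanSpace ℝ (Fin d) × ProbabilityMeasure Y =>
      c (w.1, g w.2) := hc.comp (continuous_fst.prodMk (hg.comp continuous_snd))
  have hα : IsProbabilityMeasure (μ.map f) :=
    Measure.isProbabilityMeasure_map hf.measurable.aemeasurable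
  obtain ⟨R, hRprob, hR, hmin⟩ := exists_min_relaxed (μ.map f) ν hcg
  have hlow : ∀ σ' : ProbabilityMeasure (X × Y),
      (σ' : Measure (X × Y)).map Prod.fst = μ → (σ' : Measure (X × Y)).map Prod.snd = ν →
      ∫⁻ w, ENNReal.ofReal (c (w.1, g w.2)) ∂(R) ≤
        ∫⁻ x, ENNReal.ofReal (c (f x, g (condMeas σ' x))) ∂μ := fun σ' h₁ h₂ =>
    relaxed_le hf.measurable
      (H := fun w => ENNReal.ofReal (c (w.1, g w.2))) hcg.measurable.ennreal_ofReal hmin h₁ h₂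
  -- if the relaxed minimum is infinite, every coupling has infinite cost
  by_cases hfin : ∫⁻ w, ENNReal.ofReal (c (w.1, g w.2)) ∂(R) = ∞
  · refine ⟨⟨μ.prod ν, inferInstance⟩, Measure.fst_prod, Measure.snd_prod, fun σ' h₁ h₂ => ?_⟩
    have h := hlow σ' h₁ h₂
    rw [hfin, top_le_iff] at h
    exact le_top.trans h.ge
  let Γ := (R.map (fun w => (w.1, g w.2))).support
  have hΓ : CMon Ψ Γ := fun a₁ b₁ a₂ b₂ h₁ h₂ =>
    swap_support hc (fun z => hΨnonneg _) hg hR hmin hfin h₁ h₂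
  have hpair : Measurable fun w : EuclideanSpace ℝ (Fin d) × ProbabilityMeasure Y =>
      (w.1, g w.2) := measurable_fst.prodMk (hg.measurable.comp measurable_snd)
  have hΓae : ∀ᵐ w ∂(R), (w.1, g w.2) ∈ Γ :=
    ae_of_ae_map hpair.aemeasurable Measure.support_mem_ae
  obtain ⟨D, hD, hμD, hmulti⟩ := exists_exceptional hΨconv hΨdiff hΨgrad.continuous hΓ
    hμdim hμatomless
  have hsingle : ∀ᵐ x ∂μ, f x ∉ D → ∃ b, ∀ᵐ p ∂(R.condKernel (f x)), g p = b := by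
    filter_upwards [ae_single hf.measurable hR hΓae, hmulti] with x h₁ h₂ hx
    exact h₁ fun h => hx (h₂ h)
  obtain ⟨σ, h₁, h₂, h₃⟩ := exists_collapse μ hf.measurable hR hg hlevel hD hμD hsingle
    hc.measurable.ennreal_ofReal
  exact ⟨σ, h₁, h₂, fun σ' h₁' h₂' => h₃.trans_le (hlow σ' h₁' h₂')⟩
end
end
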